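/- arXiv:math/0006207 — 5 statements merged into one kernel-verified Lean document; each statement's English description precedes it below -/
import Mathlib

section
/- The number of partitions of a positive integer n into distinct parts congruent to 1 or 2 modulo 3 equals the number of partitions of n into parts such that the difference between any two consecutive parts is at least 3, and is strictly greater than 3 whenever the larger of the two parts is a multiple of 3 (equivalently, no two consecutive multiples of 3 occur as parts). -/
/-!
Give a partition the weight `x^m q^n`, where `n` is its sum and `m` its number of parts,
multiples of `3` being counted twice, and let `E n x` be the total weight of the partitions with
parts below `3 * n` that satisfy Schur's gap condition. Splitting off the largest part gives
Andrews' recurrence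
`E (n+2) x = (1 + x q^(3n+4) + x q^(3n+5)) E (n+1) x + x² q^(3n+3) (1 - q^(3n+3)) E n x`,
and from it one obtains by induction the dual recurrence
`E (n+2) x = (1 + x q + x q²) E (n+1) (x q³) + x² q³ (1 - q^(3n+3)) E n (x q³)`.
Modulo a power of `q` the sequence `E` is eventually constant, and the dual recurrence becomes
`E x = (1 + x q) (1 + x q²) E (x q³)`. Iterating it yields `∏ (1 + x q^i)` over the `i` not
divisible by `3`, the generating function of the partitions into distinct parts of that kind.
-/

open Finset

namespace SchurPartition

/-- A partition with distinct parts is encoded by its set of parts. In a gap set any larger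
element `x` and any smaller element `y` satisfy `r x y`; for transitive `r` it is enough to
require this of consecutive parts. -/
def IsGapSet {α : Type*} [LT α] (r : α → α → Prop) (s : Finset α) : Prop :=
  ∀ x ∈ s, ∀ y ∈ s, y < x → r x y

section IsGapSet

variable {α : Type*} [LinearOrder α] {r : α → α → Prop}

theorem isGapSet_insert_of_forall_lt {a : α} {s : Finset α} (ha : ∀ y ∈ s, y < a) :
    IsGapSet r (insert a s) ↔ (∀ y ∈ s, r a y) ∧ IsGapSet r s := by
  simp only [IsGapSet, forall_mem_insert, lt_irrefl, false_imp_iff, true_and]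
  exact ⟨fun h => ⟨fun y hy => h.1 y hy (ha y hy), fun x hx => (h.2 x hx).2⟩,
    fun h => ⟨fun y hy _ => h.1 y hy,
      fun x hx => ⟨fun hax => absurd hax (ha x hx).asymm, h.2 x hx⟩⟩⟩

theorem pairwise_iff_isGapSet_toFinset {l : List α} (hl : l.Pairwise (· > ·)) :
    l.Pairwise r ↔ IsGapSet r l.toFinset := by
  induction l with
  | nil => simp [IsGapSet]
  | cons a l ih =>
    rw [List.pairwise_cons] at hl
    rw [List.pairwise_cons, List.toFinset_cons, ih hl.2,
      isGapSet_insert_of_forall_lt (by simpa using hl.1)]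
    simp only [List.mem_toFinset]

theorem bijOn_toFinset_isChain [IsTrans α r] (hr : ∀ x y, r x y → y < x) :
    Set.BijOn List.toFinset {l | l.IsChain r} {s | IsGapSet r s} := by
  have pairwise_gt {l : List α} (hl : l.IsChain r) : l.Pairwise (· > ·) :=
    hl.pairwise.imp fun h => hr _ _ h
  refine Set.InvOn.bijOn (f' := fun s => s.sort (· ≥ ·)) ⟨fun l hl => ?_, fun s _ => ?_⟩
    (fun l hl => ?_) fun s hs => ?_
  · have hgt := pairwise_gt hl
    exact (List.toFinset_sort _ (hgt.imp ne_of_gt)).2 (hgt.imp le_of_lt)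
  · exact sort_toFinset s _
  · exact (pairwise_iff_isGapSet_toFinset (pairwise_gt hl)).1 hl.pairwise
  · refine List.Pairwise.isChain
      ((pairwise_iff_isGapSet_toFinset (sortedGT_sort s).pairwise).2 ?_)
    rwa [sort_toFinset]

theorem ncard_isChain_sum_eq [AddCommMonoid α] [IsTrans α r] (hr : ∀ x y, r x y → y < x)
    (p : α → Prop) (n : α) :
    {l : List α | (∀ x ∈ l, p x) ∧ l.IsChain r ∧ l.sum = n}.ncard =
      {s : Finset α | (∀ x ∈ s, p x) ∧ IsGapSet r s ∧ ∑ x ∈ s, x = n}.ncard := by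
  have hbij := bijOn_toFinset_isChain hr
  have sum_toFinset {l : List α} (hl : l.IsChain r) : ∑ x ∈ l.toFinset, x = l.sum := by
    have hnodup : l.Nodup := hl.pairwise.imp fun h => (hr _ _ h).ne'
    simpa using List.sum_toFinset id hnodup
  rw [← (hbij.injOn.mono fun l hl => hl.2.1).ncard_image]
  congr 1
  ext s
  constructor
  · rintro ⟨l, ⟨hp, hl, hsum⟩, rfl⟩
    exact ⟨by simpa using hp, hbij.mapsTo hl, (sum_toFinset hl).trans hsum⟩
  · rintro ⟨hp, hs, hsum⟩
    obtain ⟨l, hl, rfl⟩ := hbij.surjOn hs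
    exact ⟨l, ⟨by simpa using hp, hl, (sum_toFinset hl).symm.trans hsum⟩, rfl⟩

end IsGapSet

open scoped Classical in
/-- The generating function of the gap sets of positive integers below `N`, where each element
`i` carries the weight `w i`. -/
noncomputable def gapSum {R : Type*} [CommSemiring R] (r : ℕ → ℕ → Prop) (w : ℕ → R) (N : ℕ) : R :=
  ∑ s ∈ (Ioo 0 N).powerset with IsGapSet r s, ∏ i ∈ s, w i

section GapSum

variable {R : Type*} [CommSemiring R] {r : ℕ → ℕ → Prop}

theorem gapSum_of_le_one (w : ℕ → R) {N : ℕ} (hN : N ≤ 1) : gapSum r w N = 1 := by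
  have hIoo : Ioo 0 N = ∅ := by ext; simp only [mem_Ioo, notMem_empty]; lia
  have hgap : IsGapSet r ∅ := fun _ h => absurd h (notMem_empty _)
  simp [gapSum, hIoo, filter_singleton, hgap]

theorem gapSum_succ (w : ℕ → R) {M N : ℕ} (hN : 0 < N) (hMN : M ≤ N)
    (hr : ∀ y, 0 < y → y < N → (r N y ↔ y < M)) :
    gapSum r w (N + 1) = gapSum r w N + w N * gapSum r w M := by
  classical
  have hIoo : Ioo 0 (N + 1) = insert N (Ioo 0 N) := by ext; simp only [mem_Ioo, mem_insert]; lia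
  have hgap {s : Finset ℕ} (hs : s ⊆ Ioo 0 N) :
      IsGapSet r (insert N s) ↔ s ⊆ Ioo 0 M ∧ IsGapSet r s := by
    rw [isGapSet_insert_of_forall_lt fun y hy => (mem_Ioo.1 (hs hy)).2]
    refine and_congr_left' (forall₂_congr fun y hy => ?_)
    obtain ⟨hy0, hyN⟩ := mem_Ioo.1 (hs hy)
    simp [hr y hy0 hyN, hy0]
  have hfilter : {s ∈ (Ioo 0 N).powerset | IsGapSet r (insert N s)} =
      {s ∈ (Ioo 0 M).powerset | IsGapSet r s} := by
    ext s
    simp only [mem_filter, mem_powerset]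
    exact ⟨fun h => (hgap h.1).1 h.2,
      fun h => ⟨h.1.trans (Ioo_subset_Ioo_right hMN),
        (hgap (h.1.trans (Ioo_subset_Ioo_right hMN))).2 h⟩⟩
  simp only [gapSum]
  rw [hIoo, sum_filter, sum_powerset_insert (by simp), ← sum_filter, ← sum_filter, hfilter, mul_sum]
  congr 1
  refine sum_congr rfl fun s hs => prod_insert fun hNs => ?_
  have := mem_Ioo.1 (mem_powerset.1 (mem_filter.1 hs).1 hNs)
  lia

theorem map_gapSum {S : Type*} [CommSemiring S] (φ : R →+* S) (w : ℕ → R) (N : ℕ) :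
    φ (gapSum r w N) = gapSum r (fun i => φ (w i)) N := by
  simp [gapSum]

end GapSum

section Coefficients

open Polynomial

variable {R : Type*} [CommSemiring R]

theorem coeff_sum_prod_X_pow (A : Finset (Finset ℕ)) (P : Finset ℕ → Prop) (n : ℕ)
    (hA : ∀ s, ∑ i ∈ s, i = n → (s ∈ A ↔ P s)) :
    (∑ s ∈ A, ∏ i ∈ s, (X : R[X]) ^ i).coeff n = {s | P s ∧ ∑ i ∈ s, i = n}.ncard := by
  have hset : {s | P s ∧ ∑ i ∈ s, i = n} = ↑{s ∈ A | n = ∑ i ∈ s, i} := by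
    ext s
    simp only [Set.mem_ofPred_eq, coe_filter, eq_comm (a := n)]
    exact and_congr_left fun h => (hA s h).symm
  rw [hset, Set.ncard_coe_finset]
  simp only [prod_pow_eq_pow_sum _ (fun i : ℕ => i), finsetSum_coeff, coeff_X_pow, sum_boole]

theorem lt_of_mem_of_sum_lt {s : Finset ℕ} {N i : ℕ} (hs : ∑ i ∈ s, i < N) (hi : i ∈ s) : i < N :=
  (single_le_sum (f := id) (fun _ _ => Nat.zero_le _) hi).trans_lt hs

theorem coeff_gapSum_X_pow (r : ℕ → ℕ → Prop) {n N : ℕ} (hn : n < N) :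
    (gapSum r (fun i => (X : R[X]) ^ i) N).coeff n =
      {s : Finset ℕ | (∀ x ∈ s, 0 < x) ∧ IsGapSet r s ∧ ∑ x ∈ s, x = n}.ncard := by
  classical
  simp only [← and_assoc]
  refine coeff_sum_prod_X_pow _ _ n fun s hs => ?_
  simp only [mem_filter, mem_powerset]
  exact and_congr_left' ⟨fun h x hx => (mem_Ioo.1 (h hx)).1,
    fun h x hx => mem_Ioo.2 ⟨h x hx, lt_of_mem_of_sum_lt (hs.trans_lt hn) hx⟩⟩

theorem coeff_prod_one_add_X_pow (p : ℕ → Prop) [DecidablePred p] {n N : ℕ} (hn : n < N) :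
    (∏ i ∈ range N with p i, (1 + (X : R[X]) ^ i)).coeff n =
      {s : Finset ℕ | (∀ x ∈ s, p x) ∧ ∑ x ∈ s, x = n}.ncard := by
  rw [prod_one_add]
  refine coeff_sum_prod_X_pow _ _ n fun s hs => mem_powerset.trans
    ⟨fun h x hx => (mem_filter.1 (h hx)).2, fun h x hx => mem_filter.2 ⟨?_, h x hx⟩⟩
  exact mem_range.2 (lt_of_mem_of_sum_lt (hs.trans_lt hn) hx)

end Coefficients

theorem prod_range_three_mul_succ {M : Type*} [CommMonoid M] (f : ℕ → M) (k : ℕ) :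
    ∏ i ∈ range (3 * (k + 1)) with ¬ 3 ∣ i, f i =
      (∏ i ∈ range (3 * k) with ¬ 3 ∣ i, f i) * (f (3 * k + 1) * f (3 * k + 2)) := by
  simp only [prod_filter, mul_add, mul_one, prod_range_succ]
  simp [Nat.dvd_add_right, mul_assoc]

/-- Schur's gap condition on a part `x` and a smaller part `y`. -/
def SchurGap (x y : ℕ) : Prop := y + 3 ≤ x ∧ (x % 3 = 0 → y + 3 < x)

theorem SchurGap.lt {x y : ℕ} (h : SchurGap x y) : y < x := by
  have := h.1
  lia

instance : IsTrans ℕ SchurGap where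
  trans _ _ _ hxy hyz := by unfold SchurGap at *; lia

theorem gapSum_schurGap_succ_of_not_three_dvd {R : Type*} [CommSemiring R] (w : ℕ → R) {i : ℕ}
    (hi : ¬ 3 ∣ i) :
    gapSum SchurGap w (i + 1) = gapSum SchurGap w i + w i * gapSum SchurGap w (i - 2) :=
  gapSum_succ w (by lia) (by lia) (by unfold SchurGap; lia)

theorem gapSum_schurGap_succ_of_three_dvd {R : Type*} [CommSemiring R] (w : ℕ → R) {i : ℕ}
    (hi₀ : 0 < i) (hi : 3 ∣ i) :
    gapSum SchurGap w (i + 1) = gapSum SchurGap w i + w i * gapSum SchurGap w (i - 3) :=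
  gapSum_succ w hi₀ (by lia) (by unfold SchurGap; lia)

/-- The weight of a part `i`: `q` marks its size and `x` counts parts. Multiples of `3` count as two
parts, as in Gleissberg's refinement of Schur's theorem; without this `schurSum_add_two_eq_shift`
would fail. -/
def schurWeight {R : Type*} [CommSemiring R] (q x : R) (i : ℕ) : R :=
  x ^ (if 3 ∣ i then 2 else 1) * q ^ i

/-- Andrews' two-variable generating function of the partitions with Schur's gap condition, for
parts below `3 * n`. -/
noncomputable def schurSum {R : Type*} [CommSemiring R] (q x : R) (n : ℕ) : R :=
  gapSum SchurGap (schurWeight q x) (3 * n)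

section CommSemiring

variable {R : Type*} [CommSemiring R]

theorem schurWeight_of_three_dvd (q x : R) {i : ℕ} (hi : 3 ∣ i) :
    schurWeight q x i = x ^ 2 * q ^ i := by
  rw [schurWeight, if_pos hi]

theorem schurWeight_of_not_three_dvd (q x : R) {i : ℕ} (hi : ¬ 3 ∣ i) :
    schurWeight q x i = x * q ^ i := by
  rw [schurWeight, if_neg hi, pow_one]

theorem map_schurSum {S : Type*} [CommSemiring S] (φ : R →+* S) (q x : R) (n : ℕ) :
    φ (schurSum q x n) = schurSum (φ q) (φ x) n := by
  simp only [schurSum, map_gapSum, schurWeight, map_mul, map_pow]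
  rfl

theorem schurSum_zero_right (q x : R) : schurSum q x 0 = 1 :=
  gapSum_of_le_one _ (by simp)

theorem schurSum_one_right (q x : R) : schurSum q x 1 = 1 + x * q + x * q ^ 2 := by
  have one := gapSum_schurGap_succ_of_not_three_dvd (schurWeight q x) (i := 1) (by simp)
  have two := gapSum_schurGap_succ_of_not_three_dvd (schurWeight q x) (i := 2) (by simp)
  simp only [gapSum_of_le_one, Nat.reduceAdd, Nat.reduceSub, zero_le, le_refl, mul_one] at one two
  rw [schurSum, mul_one, two, one]
  simp [schurWeight]

end CommSemiring

section CommRing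

variable {R : Type*} [CommRing R]

/- Lowering the bound from `3n+6` one part at a time leads to the bounds `3n+3`, `3n` and, through
the part `3n+4`, `3n+2`; the last one is eliminated by splitting off the part `3n+2` from the sum
with bound `3n+3`. This elimination is the source of the factor `1 - q ^ (3n+3)`. -/
theorem schurSum_add_two (q x : R) (n : ℕ) :
    schurSum q x (n + 2) =
      (1 + x * q ^ (3 * n + 4) + x * q ^ (3 * n + 5)) * schurSum q x (n + 1) +
        x ^ 2 * q ^ (3 * n + 3) * (1 - q ^ (3 * n + 3)) * schurSum q x n := by
  have split₅ := gapSum_schurGap_succ_of_not_three_dvd (schurWeight q x) (i := 3 * n + 5) (by lia)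
  have split₄ := gapSum_schurGap_succ_of_not_three_dvd (schurWeight q x) (i := 3 * n + 4) (by lia)
  have split₃ := gapSum_schurGap_succ_of_three_dvd (schurWeight q x) (i := 3 * n + 3)
    (by lia) (by lia)
  have split₂ := gapSum_schurGap_succ_of_not_three_dvd (schurWeight q x) (i := 3 * n + 2) (by lia)
  rw [schurWeight_of_not_three_dvd q x (by lia)] at split₅ split₄ split₂
  rw [schurWeight_of_three_dvd q x (by lia)] at split₃
  simp only [schurSum, mul_add, Nat.reduceMul, mul_one, add_assoc, Nat.reduceAdd,
    Nat.add_sub_cancel, Nat.add_sub_assoc, Nat.reduceSub, Nat.reduceLeDiff]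
    at split₅ split₄ split₃ split₂ ⊢
  linear_combination split₅ + split₄ + split₃ - x * q ^ (3 * n + 4) * split₂

theorem schurSum_add_two_eq_shift (q x : R) (n : ℕ) :
    schurSum q x (n + 2) =
      (1 + x * q + x * q ^ 2) * schurSum q (x * q ^ 3) (n + 1) +
        x ^ 2 * q ^ 3 * (1 - q ^ (3 * n + 3)) * schurSum q (x * q ^ 3) n := by
  induction n using Nat.twoStepInduction with
  | zero =>
    simp only [schurSum_add_two, zero_add, schurSum_zero_right, schurSum_one_right]
    ring
  | one =>
    simp only [schurSum_add_two, Nat.reduceAdd, zero_add, schurSum_zero_right, schurSum_one_right]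
    ring
  | more n ih₀ ih₁ =>
    rw [schurSum_add_two q x (n + 2), ih₀, ih₁, schurSum_add_two q (x * q ^ 3) (n + 1),
      schurSum_add_two q (x * q ^ 3) n]
    ring

theorem schurSum_zero_middle (q : R) (n : ℕ) : schurSum q 0 n = 1 := by
  induction n using Nat.twoStepInduction with
  | zero => exact schurSum_zero_right q 0
  | one => simp [schurSum_one_right]
  | more n _ ih₁ => simp [schurSum_add_two, ih₁]

theorem schurSum_succ_of_pow_eq_zero {q : R} {M : ℕ} (hq : q ^ M = 0) (x : R) :
    schurSum q x (M + 1) = schurSum q x M := by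
  cases M with
  | zero =>
    have := subsingleton_of_zero_eq_one (by simpa using hq.symm)
    exact Subsingleton.elim _ _
  | succ n =>
    have hpow {k : ℕ} (hk : n + 1 ≤ k) : q ^ k = 0 := pow_eq_zero_of_le hk hq
    rw [schurSum_add_two, hpow (by lia), hpow (by lia), hpow (by lia)]
    ring

theorem schurSum_eq_mul_shift_of_pow_eq_zero {q : R} {M : ℕ} (hq : q ^ M = 0) (x : R) :
    schurSum q x M = (1 + x * q) * (1 + x * q ^ 2) * schurSum q (x * q ^ 3) M := by
  have hq₁ : q ^ (M + 1) = 0 := pow_eq_zero_of_le M.le_succ hq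
  have hq₃ : q ^ (3 * M + 3) = 0 := pow_eq_zero_of_le (by lia) hq
  rw [← schurSum_succ_of_pow_eq_zero hq x, ← schurSum_succ_of_pow_eq_zero hq₁ x,
    schurSum_add_two_eq_shift, schurSum_succ_of_pow_eq_zero hq, hq₃]
  ring

theorem schurSum_eq_prod_mul_of_pow_eq_zero {q : R} {M : ℕ} (hq : q ^ M = 0) (x : R) (k : ℕ) :
    schurSum q x M =
      (∏ i ∈ range (3 * k) with ¬ 3 ∣ i, (1 + x * q ^ i)) * schurSum q (x * q ^ (3 * k)) M := by
  induction k with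
  | zero => simp
  | succ k ih =>
    rw [ih, schurSum_eq_mul_shift_of_pow_eq_zero hq, prod_range_three_mul_succ]
    ring_nf

theorem schurSum_eq_prod_of_pow_eq_zero {q : R} {M : ℕ} (hq : q ^ M = 0) (x : R) :
    schurSum q x M = ∏ i ∈ range (3 * M) with ¬ 3 ∣ i, (1 + x * q ^ i) := by
  rw [schurSum_eq_prod_mul_of_pow_eq_zero hq x M, pow_eq_zero_of_le (by lia) hq, mul_zero,
    schurSum_zero_middle, mul_one]

theorem pow_dvd_schurSum_sub_prod (q x : R) (M : ℕ) :
    q ^ M ∣ schurSum q x M - ∏ i ∈ range (3 * M) with ¬ 3 ∣ i, (1 + x * q ^ i) := by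
  let φ := Ideal.Quotient.mk (Ideal.span {q ^ M})
  have hq : φ q ^ M = 0 := by
    rw [← map_pow, Ideal.Quotient.eq_zero_iff_mem]
    exact Ideal.mem_span_singleton_self _
  rw [← Ideal.mem_span_singleton, ← Ideal.Quotient.eq, map_schurSum]
  simpa using schurSum_eq_prod_of_pow_eq_zero hq (φ x)

end CommRing

open Polynomial in
theorem ncard_not_three_dvd_eq_ncard_isGapSet_schurGap (n : ℕ) :
    {s : Finset ℕ | (∀ x ∈ s, ¬ 3 ∣ x) ∧ ∑ x ∈ s, x = n}.ncard =
      {s : Finset ℕ | (∀ x ∈ s, 0 < x) ∧ IsGapSet SchurGap s ∧ ∑ x ∈ s, x = n}.ncard := by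
  have hn : n < 3 * (n + 1) := by lia
  have hw : schurWeight (X : ℤ[X]) 1 = fun i => X ^ i := by ext1 i; simp [schurWeight]
  have hcoeff := X_pow_dvd_iff.1 (pow_dvd_schurSum_sub_prod (X : ℤ[X]) 1 (n + 1)) n n.lt_succ_self
  simp only [schurSum, hw, one_mul, coeff_sub, coeff_gapSum_X_pow _ hn,
    coeff_prod_one_add_X_pow _ hn] at hcoeff
  exact_mod_cast (sub_eq_zero.1 hcoeff).symm

end SchurPartition

open SchurPartition in
/-- Schur's partition theorem: the number of partitions of `n` into distinct parts
congruent to 1 or 2 mod 3 equals the number of partitions of `n` into parts where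
consecutive parts differ by at least 3, with strict inequality (difference > 3)
whenever the larger part is a multiple of 3.  Partitions are represented as
(strictly/weakly) decreasing lists of positive integers. -/
theorem schur_partition_theorem (n : ℕ) (hn : 0 < n) :
    {l : List ℕ | l.Chain' (· > ·) ∧ (∀ x ∈ l, x % 3 = 1 ∨ x % 3 = 2) ∧ l.sum = n}.ncard =
    {l : List ℕ | (∀ x ∈ l, 0 < x) ∧
      l.Chain' (fun x y => y + 3 ≤ x ∧ (x % 3 = 0 → y + 3 < x)) ∧ l.sum = n}.ncard := by
  have hmod (x : ℕ) : x % 3 = 1 ∨ x % 3 = 2 ↔ ¬ 3 ∣ x := by lia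
  have hgt (s : Finset ℕ) : IsGapSet (· > ·) s := fun _ _ _ _ h => h
  calc
    _ = {l : List ℕ | (∀ x ∈ l, ¬ 3 ∣ x) ∧ l.IsChain (· > ·) ∧ l.sum = n}.ncard := by
      simp only [hmod, and_left_comm]
      rfl
    _ = {s : Finset ℕ | (∀ x ∈ s, ¬ 3 ∣ x) ∧ ∑ x ∈ s, x = n}.ncard := by
      simp only [ncard_isChain_sum_eq (r := (· > ·)) (fun _ _ h => h), hgt, true_and]
    _ = {s : Finset ℕ | (∀ x ∈ s, 0 < x) ∧ IsGapSet SchurGap s ∧ ∑ x ∈ s, x = n}.ncard :=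
      ncard_not_three_dvd_eq_ncard_isGapSet_schurGap n
    _ = _ := (ncard_isChain_sum_eq (fun _ _ => SchurGap.lt) (0 < ·) n).symm
end

section
/- For all integers L, M, i, j, the identity \sum_{k=0}^{\min(i,j)} q^{(i-k)(j-k)} [M-i-j+k; k] [M-j; i-k] [L-i; j-k] = [L; j] [M-j; i] holds in the field of rational functions ℚ(q), where [m; r] denotes the extended q-binomial coefficient. -/
open Finset

/-- `(q)_n = (q;q)_n = ∏_{t=0}^{n-1} (1 - q^{t+1})` in `ℚ(q)`. -/
noncomputable def qPoch (n : ℕ) : RatFunc ℚ :=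
  ∏ t ∈ Finset.range n, (1 - (RatFunc.X : RatFunc ℚ) ^ (t + 1))

/-- The extended q-binomial coefficient `[m; r] = (q^{m-r+1}; q)_r / (q;q)_r` for `r ≥ 0`
(where `m` may be any integer, so negative powers of `q` are allowed), and `0` for `r < 0`. -/
noncomputable def qbinE (m r : ℤ) : RatFunc ℚ :=
  if 0 ≤ r then
    (∏ t ∈ Finset.range r.toNat, (1 - (RatFunc.X : RatFunc ℚ) ^ (m - r + 1 + (t : ℤ)))) /
      qPoch r.toNat
  else 0

/-!
The product `[M - i - j + k; k] [M - j; i - k]` equals `[M - j; i] [i; k]`, by trinomial revision.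
After factoring out `[M - j; i]`, what remains is the `q`-Vandermonde convolution for
`L = i + (L - i)`. The convolution holds for all integer upper indices `m` and `n`: both of its
sides satisfy the same Pascal recurrence in `m`, which can also be run towards negative `m` because
`q ≠ 0`.
-/

lemma sum_Icc_zero_natCast {α : Type*} [AddCommMonoid α] (f : ℤ → α) (n : ℕ) :
    ∑ k ∈ Icc (0 : ℤ) n, f k = ∑ k ∈ range (n + 1), f k := by
  simp [Int.Icc_eq_finset_map]

section QChoose

variable {K : Type*} [Field K] {q : K}

/-- The `q`-analogue `(1 - q ^ m) (1 - q ^ (m - 1)) ⋯ (1 - q ^ (m - r + 1))` of the falling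
factorial, without the usual normalisation by `(1 - q) ^ r`. -/
def qDescFactorial (q : K) (m : ℤ) (r : ℕ) : K :=
  ∏ t ∈ range r, (1 - q ^ (m - t))

/-- The `q`-binomial coefficient with integer upper index. Its denominator `qDescFactorial q r r`
is `(q; q)_r`, which vanishes (making the quotient a junk value) if `q ^ t = 1` for some
`1 ≤ t ≤ r`. -/
def qChoose (q : K) (m : ℤ) (r : ℕ) : K :=
  qDescFactorial q m r / qDescFactorial q r r

lemma qDescFactorial_succ (q : K) (m : ℤ) (r : ℕ) :
    qDescFactorial q m (r + 1) = qDescFactorial q m r * (1 - q ^ (m - r)) :=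
  prod_range_succ _ _

lemma qDescFactorial_add (q : K) (m : ℤ) (r s : ℕ) :
    qDescFactorial q m (r + s) = qDescFactorial q m r * qDescFactorial q (m - r) s := by
  simp only [qDescFactorial, prod_range_add, Nat.cast_add, sub_sub]

lemma qDescFactorial_add_one_succ (q : K) (m : ℤ) (r : ℕ) :
    qDescFactorial q (m + 1) (r + 1) = (1 - q ^ (m + 1)) * qDescFactorial q m r := by
  simpa [qDescFactorial, add_comm r] using qDescFactorial_add q (m + 1) 1 r

lemma qDescFactorial_eq_zero_of_lt (q : K) {n r : ℕ} (h : n < r) : qDescFactorial q n r = 0 :=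
  prod_eq_zero (mem_range.mpr h) (by simp)

lemma qDescFactorial_self_ne_zero (hq : ¬IsOfFinOrder q) (r : ℕ) : qDescFactorial q r r ≠ 0 := by
  refine prod_ne_zero_iff.mpr fun t ht h ↦ hq (isOfFinOrder_iff_pow_eq_one.mpr ⟨r - t, ?_, ?_⟩)
  · exact Nat.sub_pos_of_lt (mem_range.mp ht)
  · rw [← Nat.cast_sub (mem_range.mp ht).le, zpow_natCast] at h
    exact (sub_eq_zero.mp h).symm

@[simp]
lemma qChoose_zero_right (q : K) (m : ℤ) : qChoose q m 0 = 1 := by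
  simp [qChoose, qDescFactorial]

lemma qChoose_eq_zero_of_lt (q : K) {n r : ℕ} (h : n < r) : qChoose q n r = 0 := by
  rw [qChoose, qDescFactorial_eq_zero_of_lt q h, zero_div]

lemma qChoose_add_one_succ (hq₀ : q ≠ 0) (hq : ¬IsOfFinOrder q) (m : ℤ) (r : ℕ) :
    qChoose q (m + 1) (r + 1) = qChoose q m r + q ^ (r + 1) * qChoose q m (r + 1) := by
  have hpow : q ^ (m + 1) = q ^ (r + 1) * q ^ (m - r) := by
    rw [← zpow_natCast, ← zpow_add₀ hq₀]
    congr 1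
    push_cast
    ring
  have hden : qDescFactorial q (r + 1 : ℕ) (r + 1) = (1 - q ^ (r + 1)) * qDescFactorial q r r := by
    exact_mod_cast qDescFactorial_add_one_succ q r r
  obtain ⟨hr, hr₀⟩ := mul_ne_zero_iff.mp (hden ▸ qDescFactorial_self_ne_zero hq (r + 1))
  rw [qChoose, qChoose, qChoose, hden, qDescFactorial_add_one_succ, qDescFactorial_succ, hpow]
  field_simp
  ring

lemma qChoose_sub_mul_qChoose (hq : ¬IsOfFinOrder q) (m : ℤ) (k l : ℕ) :
    qChoose q (m - l) k * qChoose q m l = qChoose q m (k + l) * qChoose q (k + l : ℕ) k := by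
  have hnum : qDescFactorial q m (k + l) = qDescFactorial q m l * qDescFactorial q (m - l) k := by
    rw [add_comm, qDescFactorial_add]
  have hden : qDescFactorial q (k + l : ℕ) (k + l) =
      qDescFactorial q (k + l : ℕ) k * qDescFactorial q l l := by
    simp [qDescFactorial_add]
  obtain ⟨hkl, hl⟩ := mul_ne_zero_iff.mp (hden ▸ qDescFactorial_self_ne_zero hq (k + l))
  have hk := qDescFactorial_self_ne_zero hq k
  simp only [qChoose, hnum, hden]
  field_simp

lemma sum_antidiagonal_qChoose_add_one_succ (hq₀ : q ≠ 0) (hq : ¬IsOfFinOrder q) (m n : ℤ) (j : ℕ) :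
    ∑ p ∈ antidiagonal (j + 1),
        q ^ ((m + 1 - p.1) * p.2) * qChoose q (m + 1) p.1 * qChoose q n p.2 =
      ∑ p ∈ antidiagonal j, q ^ ((m - p.1) * p.2) * qChoose q m p.1 * qChoose q n p.2 +
        q ^ (j + 1) * ∑ p ∈ antidiagonal (j + 1),
          q ^ ((m - p.1) * p.2) * qChoose q m p.1 * qChoose q n p.2 := by
  have hfirst : q ^ ((m + 1) * (j + 1)) = q ^ (j + 1) * q ^ (m * (j + 1)) := by
    rw [← zpow_natCast, ← zpow_add₀ hq₀]
    congr 1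
    push_cast
    ring
  have hterm : ∀ p ∈ antidiagonal j,
      q ^ ((m - p.1) * p.2) * qChoose q (m + 1) (p.1 + 1) * qChoose q n p.2 =
        q ^ ((m - p.1) * p.2) * qChoose q m p.1 * qChoose q n p.2 +
          q ^ (j + 1) *
            (q ^ ((m - (p.1 + 1)) * p.2) * qChoose q m (p.1 + 1) * qChoose q n p.2) := by
    rintro ⟨a, b⟩ hab
    obtain rfl : a + b = j := mem_antidiagonal.mp hab
    have hpow : q ^ ((m - a) * b) * q ^ (a + 1) = q ^ (a + b + 1) * q ^ ((m - (a + 1)) * b) := by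
      rw [← zpow_natCast, ← zpow_natCast, ← zpow_add₀ hq₀, ← zpow_add₀ hq₀]
      congr 1
      push_cast
      ring
    rw [qChoose_add_one_succ hq₀ hq]
    linear_combination qChoose q m (a + 1) * qChoose q n b * hpow
  simp only [Nat.sum_antidiagonal_succ, Nat.cast_zero, Nat.cast_add, Nat.cast_one, sub_zero,
    add_sub_add_right_eq_sub, qChoose_zero_right, hfirst, sum_congr rfl hterm, sum_add_distrib,
    ← mul_sum]
  ring

lemma qChoose_add (hq₀ : q ≠ 0) (hq : ¬IsOfFinOrder q) (m n : ℤ) (j : ℕ) :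
    qChoose q (m + n) j =
      ∑ p ∈ antidiagonal j, q ^ ((m - p.1) * p.2) * qChoose q m p.1 * qChoose q n p.2 := by
  induction j generalizing m with
  | zero => simp
  | succ j ih =>
    have hstep (m : ℤ) :
        qChoose q (m + 1 + n) (j + 1) = ∑ p ∈ antidiagonal (j + 1),
            q ^ ((m + 1 - p.1) * p.2) * qChoose q (m + 1) p.1 * qChoose q n p.2 ↔
          qChoose q (m + n) (j + 1) = ∑ p ∈ antidiagonal (j + 1),
            q ^ ((m - p.1) * p.2) * qChoose q m p.1 * qChoose q n p.2 := by
      rw [sum_antidiagonal_qChoose_add_one_succ hq₀ hq, add_right_comm,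
        qChoose_add_one_succ hq₀ hq, ← ih, add_right_inj, mul_right_inj' (pow_ne_zero _ hq₀)]
    induction m using Int.induction_on with
    | zero =>
      have hzero (a : ℕ) : qChoose q 0 (a + 1) = 0 :=
        qChoose_eq_zero_of_lt q a.succ_pos
      simp [Nat.sum_antidiagonal_succ, hzero]
    | succ m hm => exact (hstep m).mpr hm
    | pred m hm => exact (hstep (-m - 1)).mp (by simpa using hm)

lemma sum_qChoose_mul_qChoose_sub (hq₀ : q ≠ 0) (hq : ¬IsOfFinOrder q) (L : ℤ) (i j : ℕ) :
    ∑ k ∈ range (min i j + 1),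
        q ^ (((i : ℤ) - k) * (j - k)) * qChoose q i k * qChoose q (L - i) (j - k) =
      qChoose q L j := by
  rw [← add_sub_cancel (i : ℤ) L, qChoose_add hq₀ hq, Nat.sum_antidiagonal_eq_sum_range_succ_mk,
    add_sub_cancel]
  refine sum_subset_zero_on_sdiff (range_mono (by lia)) (fun k hk ↦ ?_) fun k hk ↦ ?_
  · rw [qChoose_eq_zero_of_lt q (by grind), mul_zero, zero_mul]
  · rw [Nat.cast_sub (by grind)]

lemma sum_qChoose_mul_qChoose_mul_qChoose (hq₀ : q ≠ 0) (hq : ¬IsOfFinOrder q)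
    (L M : ℤ) (i j : ℕ) :
    ∑ k ∈ range (min i j + 1), q ^ (((i : ℤ) - k) * (j - k)) *
        qChoose q (M - i - j + k) k * qChoose q (M - j) (i - k) * qChoose q (L - i) (j - k) =
      qChoose q L j * qChoose q (M - j) i := by
  rw [← sum_qChoose_mul_qChoose_sub hq₀ hq L i j, sum_mul]
  refine sum_congr rfl fun k hk ↦ ?_
  have hki : k ≤ i := by grind
  have hrev : qChoose q (M - i - j + k) k * qChoose q (M - j) (i - k) =
      qChoose q (M - j) i * qChoose q i k := by
    convert qChoose_sub_mul_qChoose hq (M - j) k (i - k) using 3 <;> lia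
  linear_combination q ^ (((i : ℤ) - k) * (j - k)) * qChoose q (L - i) (j - k) * hrev

/-- The `q`-binomial coefficient with both indices integers, extended by `0` to negative lower
index. -/
def extQChoose (q : K) (m : ℤ) : ℤ → K
  | (r : ℕ) => qChoose q m r
  | .negSucc _ => 0

lemma extQChoose_natCast (q : K) (m : ℤ) (r : ℕ) : extQChoose q m r = qChoose q m r := rfl

lemma extQChoose_of_neg (q : K) (m : ℤ) {r : ℤ} (hr : r < 0) : extQChoose q m r = 0 := by
  obtain ⟨n, rfl⟩ := Int.eq_negSucc_of_lt_zero hr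
  rfl

theorem double_bounded_key_identity_general (hq₀ : q ≠ 0) (hq : ¬IsOfFinOrder q) (L M i j : ℤ) :
    ∑ k ∈ Icc (0 : ℤ) (min i j), q ^ ((i - k) * (j - k)) *
        extQChoose q (M - i - j + k) k * extQChoose q (M - j) (i - k) *
          extQChoose q (L - i) (j - k) =
      extQChoose q L j * extQChoose q (M - j) i := by
  rcases lt_or_ge i 0 with hi | hi
  · rw [Icc_eq_empty (by lia), sum_empty, extQChoose_of_neg q _ hi, mul_zero]
  rcases lt_or_ge j 0 with hj | hj
  · rw [Icc_eq_empty (by lia), sum_empty, extQChoose_of_neg q _ hj, zero_mul]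
  lift i to ℕ using hi
  lift j to ℕ using hj
  rw [extQChoose_natCast, extQChoose_natCast, ← sum_qChoose_mul_qChoose_mul_qChoose hq₀ hq,
    ← Nat.cast_min, sum_Icc_zero_natCast]
  refine sum_congr rfl fun k hk ↦ ?_
  obtain ⟨hki, hkj⟩ := le_min_iff.mp (mem_range_succ_iff.mp hk)
  rw [← Nat.cast_sub hki, ← Nat.cast_sub hkj]
  simp only [extQChoose_natCast]

end QChoose

lemma not_isOfFinOrder_ratFunc_X (F : Type*) [Field F] : ¬IsOfFinOrder (RatFunc.X : RatFunc F) := by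
  intro h
  obtain ⟨n, hn, hX⟩ := isOfFinOrder_iff_pow_eq_one.mp h
  exact (RatFunc.transcendental_X (K := F)).pow hn (hX ▸ isAlgebraic_one)

lemma qPoch_eq_qDescFactorial_self (r : ℕ) : qPoch r = qDescFactorial RatFunc.X r r := by
  rw [qPoch, qDescFactorial, ← prod_range_reflect]
  refine prod_congr rfl fun t ht ↦ ?_
  rw [← zpow_natCast]
  congr 2
  grind

lemma qbinE_eq_extQChoose (m r : ℤ) : qbinE m r = extQChoose RatFunc.X m r := by
  rcases lt_or_ge r 0 with hr | hr
  · rw [qbinE, if_neg hr.not_ge, extQChoose_of_neg _ _ hr]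
  lift r to ℕ using hr
  rw [qbinE, if_pos r.cast_nonneg, Int.toNat_natCast, qPoch_eq_qDescFactorial_self,
    extQChoose_natCast, qChoose, qDescFactorial, ← prod_range_reflect]
  congr 1
  refine prod_congr rfl fun t ht ↦ ?_
  congr 2
  grind

/-- The double bounded key identity (2.1) for arbitrary integers `L, M, i, j`, as an
identity in the field of rational functions `ℚ(q)`. -/
theorem double_bounded_key_identity (L M i j : ℤ) :
    ∑ k ∈ Finset.Icc (0 : ℤ) (min i j),
      (RatFunc.X : RatFunc ℚ) ^ ((i - k) * (j - k)) *
        qbinE (M - i - j + k) k * qbinE (M - j) (i - k) * qbinE (L - i) (j - k) =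
    qbinE L j * qbinE (M - j) i := by
  simpa only [qbinE_eq_extQChoose] using
    double_bounded_key_identity_general RatFunc.X_ne_zero (not_isOfFinOrder_ratFunc_X ℚ) L M i j
end

section
/- For all integers L, M, i, j with i ≥ 0, j ≥ 0, L ≥ i+j and M ≥ i+j, the identity \sum_{k=0}^{\min(i,j)} q^{(i-k)(j-k)} [M-i-j+k; k] [M-j; i-k] [L-i; j-k] = [L; j] [M-j; i] holds as an identity of polynomials in q, where [m; r] denotes the Gaussian binomial coefficient. -/
open Finset

/-- The Gaussian (q-)binomial coefficient `[m; r] = (q)_m / ((q)_r (q)_{m-r})` for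
`0 ≤ r ≤ m`, and `0` otherwise. -/
noncomputable def qbin (m r : ℤ) : RatFunc ℚ :=
  if 0 ≤ r ∧ r ≤ m then qPoch m.toNat / (qPoch r.toNat * qPoch (m - r).toNat) else 0

/-!
Trinomial revision turns `[M-i-j+k; k] [M-j; i-k]` into `[M-j; i] [i; k]`. The factor `[M-j; i]` is
independent of `k`, and the sum that remains is the `q`-Vandermonde expansion of
`[L; j] = [i + (L-i); j]`, which follows from the `q`-Pascal rule by induction on `i`.
-/

lemma one_sub_X_pow_succ_ne_zero {K : Type*} [Field K] (n : ℕ) :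
    1 - (RatFunc.X : RatFunc K) ^ (n + 1) ≠ 0 := by
  refine sub_ne_zero.mpr fun h ↦ Polynomial.X_pow_sub_C_ne_zero n.succ_pos (1 : K) ?_
  exact RatFunc.algebraMap_injective K (by simp [← h])

lemma qPoch_zero : qPoch 0 = 1 := prod_range_zero _

lemma qPoch_succ (n : ℕ) : qPoch (n + 1) = qPoch n * (1 - RatFunc.X ^ (n + 1)) :=
  prod_range_succ _ n

lemma qPoch_ne_zero (n : ℕ) : qPoch n ≠ 0 :=
  prod_ne_zero_iff.mpr fun t _ ↦ one_sub_X_pow_succ_ne_zero t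

lemma qbin_eq_zero_of_neg (m : ℤ) {r : ℤ} (hr : r < 0) : qbin m r = 0 :=
  if_neg (by omega)

lemma qbin_eq_zero_of_lt {m r : ℤ} (hr : m < r) : qbin m r = 0 :=
  if_neg (by omega)

lemma qbin_eq_div {m r : ℤ} {a b : ℕ} (hr : r = a) (hm : m = a + b) :
    qbin m r = qPoch (a + b) / (qPoch a * qPoch b) := by
  subst hr hm
  rw [qbin, if_pos (by omega), add_sub_cancel_left, ← Nat.cast_add]
  simp only [Int.toNat_natCast]

lemma qbin_zero_right {m : ℤ} (hm : 0 ≤ m) : qbin m 0 = 1 := by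
  rw [qbin_eq_div (a := 0) (b := m.toNat) (by omega) (by omega), qPoch_zero, zero_add, one_mul,
    div_self (qPoch_ne_zero _)]

lemma qbin_self {m : ℤ} (hm : 0 ≤ m) : qbin m m = 1 := by
  rw [qbin_eq_div (a := m.toNat) (b := 0) (by omega) (by omega), qPoch_zero, add_zero, mul_one,
    div_self (qPoch_ne_zero _)]

lemma qbin_succ_left_of_pos_of_le {m r : ℤ} (hr : 0 < r) (hrm : r ≤ m) :
    qbin (m + 1) r = qbin m (r - 1) + RatFunc.X ^ r * qbin m r := by
  obtain ⟨a, rfl⟩ : ∃ a : ℕ, r = (a + 1 : ℕ) := ⟨(r - 1).toNat, by omega⟩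
  obtain ⟨b, rfl⟩ : ∃ b : ℕ, m = (a + b + 1 : ℕ) := ⟨(m - a - 1).toNat, by omega⟩
  rw [qbin_eq_div (a := a + 1) (b := b + 1) (by omega) (by omega),
    qbin_eq_div (a := a) (b := b + 1) (by omega) (by omega),
    qbin_eq_div (a := a + 1) (b := b) (by omega) (by omega), zpow_natCast,
    show a + 1 + (b + 1) = a + b + 1 + 1 by ring, show a + (b + 1) = a + b + 1 by ring,
    show a + 1 + b = a + b + 1 by ring, qPoch_succ (a + b + 1), qPoch_succ a, qPoch_succ b]
  have ha := one_sub_X_pow_succ_ne_zero (K := ℚ) a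
  have hb := one_sub_X_pow_succ_ne_zero (K := ℚ) b
  field_simp
  ring

lemma qbin_succ_left {m : ℤ} (hm : 0 ≤ m) (r : ℤ) :
    qbin (m + 1) r = qbin m (r - 1) + RatFunc.X ^ r * qbin m r := by
  rcases lt_trichotomy r 0 with hr | rfl | hr
  · simp [qbin_eq_zero_of_neg _ hr, qbin_eq_zero_of_neg m (show r - 1 < 0 by omega)]
  · simp [qbin_zero_right hm, qbin_zero_right (show 0 ≤ m + 1 by omega), qbin_eq_zero_of_neg]
  rcases lt_trichotomy r (m + 1) with hrm | rfl | hrm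
  · exact qbin_succ_left_of_pos_of_le hr (by omega)
  · simp [qbin_self hm, qbin_self (show 0 ≤ m + 1 by omega), qbin_eq_zero_of_lt]
  · simp [qbin_eq_zero_of_lt hrm, qbin_eq_zero_of_lt (show m < r - 1 by omega),
      qbin_eq_zero_of_lt (show m < r by omega)]

lemma qbin_mul_qbin (m r k : ℤ) :
    qbin m r * qbin r k = qbin m (r - k) * qbin (m - (r - k)) k := by
  by_cases h : 0 ≤ k ∧ k ≤ r ∧ r ≤ m
  · obtain ⟨hk, hkr, hrm⟩ := h
    lift k to ℕ using hk
    obtain ⟨a, rfl⟩ := Int.le.dest hkr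
    obtain ⟨b, rfl⟩ := Int.le.dest hrm
    rw [qbin_eq_div (a := k + a) (b := b) (by omega) (by omega),
      qbin_eq_div (a := k) (b := a) (by omega) (by omega),
      qbin_eq_div (a := a) (b := k + b) (by omega) (by omega),
      qbin_eq_div (a := k) (b := b) (by omega) (by omega),
      show a + (k + b) = k + a + b by ring]
    have hka := qPoch_ne_zero (k + a)
    have hkb := qPoch_ne_zero (k + b)
    field_simp
  · have hleft : qbin m r * qbin r k = 0 := by grind [qbin]
    have hright : qbin m (r - k) * qbin (m - (r - k)) k = 0 := by grind [qbin]
    rw [hleft, hright]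

lemma qbin_natCast_add_eq_sum_range (m : ℕ) {n : ℤ} (hn : 0 ≤ n) (r : ℤ) :
    qbin (m + n) r =
      ∑ k ∈ range (m + 1), RatFunc.X ^ ((m - k) * (r - k)) * qbin m k * qbin n (r - k) := by
  induction m generalizing r with
  | zero => simp [qbin_zero_right]
  | succ m ih =>
    have pascal (k : ℤ) :
        RatFunc.X ^ ((m + 1 - k) * (r - k)) * qbin (m + 1) k * qbin n (r - k) =
          RatFunc.X ^ ((m - (k - 1)) * (r - 1 - (k - 1))) * qbin m (k - 1) *
              qbin n (r - 1 - (k - 1)) +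
            RatFunc.X ^ r * (RatFunc.X ^ ((m - k) * (r - k)) * qbin m k * qbin n (r - k)) := by
      have hpow : (RatFunc.X : RatFunc ℚ) ^ ((m + 1 - k) * (r - k)) * RatFunc.X ^ k =
          RatFunc.X ^ r * RatFunc.X ^ ((m - k) * (r - k)) := by
        rw [← zpow_add₀ RatFunc.X_ne_zero, ← zpow_add₀ RatFunc.X_ne_zero]
        ring_nf
      rw [qbin_succ_left m.cast_nonneg, show r - 1 - (k - 1) = r - k by ring,
        show m - (k - 1) = m + 1 - k by ring]
      linear_combination qbin m k * qbin n (r - k) * hpow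
    rw [Nat.cast_succ, add_right_comm, qbin_succ_left (by positivity), ih, ih]
    simp only [pascal, sum_add_distrib, ← mul_sum]
    -- The two leftover boundary terms carry the factors `[m; -1] = 0` and `[m; m+1] = 0`.
    rw [sum_range_succ' _ (m + 1), sum_range_succ _ (m + 1)]
    simp [qbin_eq_zero_of_neg, qbin_eq_zero_of_lt]

lemma qbin_add_eq_sum_Icc {m n : ℤ} (hm : 0 ≤ m) (hn : 0 ≤ n) (r : ℤ) :
    qbin (m + n) r =
      ∑ k ∈ Icc 0 (min m r), RatFunc.X ^ ((m - k) * (r - k)) * qbin m k * qbin n (r - k) := by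
  lift m to ℕ using hm
  have hrange : Icc (0 : ℤ) m = (range (m + 1)).image (↑) := by
    rw [Nat.range_succ_eq_Icc_zero, ← coe_inj, coe_image, coe_Icc, coe_Icc,
      Nat.image_cast_int_Icc, Nat.cast_zero]
  have hsub : Icc 0 (min (m : ℤ) r) ⊆ Icc 0 (m : ℤ) := Icc_subset_Icc_right (min_le_left _ _)
  rw [qbin_natCast_add_eq_sum_range m hn, sum_subset hsub, hrange,
    sum_image Nat.cast_injective.injOn]
  intro k hk hk'
  have hrk : r - k < 0 := by simp only [mem_Icc] at hk hk'; omega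
  rw [qbin_eq_zero_of_neg n hrk, mul_zero]

theorem double_bounded_key_identity_polynomial_general (M j : ℤ) {L i : ℤ} (hL : i ≤ L) :
    ∑ k ∈ Icc 0 (min i j),
      (RatFunc.X : RatFunc ℚ) ^ ((i - k) * (j - k)) *
        qbin (M - i - j + k) k * qbin (M - j) (i - k) * qbin (L - i) (j - k) =
    qbin L j * qbin (M - j) i := by
  rcases lt_or_ge i 0 with hi | hi
  · rw [Icc_eq_empty (by omega), sum_empty, qbin_eq_zero_of_neg _ hi, mul_zero]
  have hvandermonde := qbin_add_eq_sum_Icc hi (sub_nonneg.mpr hL) j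
  rw [add_sub_cancel] at hvandermonde
  rw [hvandermonde, sum_mul]
  refine sum_congr rfl fun k _ ↦ ?_
  have hrevision := qbin_mul_qbin (M - j) i k
  rw [show M - j - (i - k) = M - i - j + k by ring] at hrevision
  linear_combination
    -(RatFunc.X : RatFunc ℚ) ^ ((i - k) * (j - k)) * qbin (L - i) (j - k) * hrevision

/-- The double bounded key identity (2.1) for `i, j ≥ 0`, `L, M ≥ i + j`:
`∑_{k=0}^{min(i,j)} q^{(i-k)(j-k)} [M-i-j+k; k] [M-j; i-k] [L-i; j-k] = [L; j] [M-j; i]`. -/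
theorem double_bounded_key_identity_polynomial (L M i j : ℤ)
    (hi : 0 ≤ i) (hj : 0 ≤ j) (hL : i + j ≤ L) (hM : i + j ≤ M) :
    ∑ k ∈ Finset.Icc (0 : ℤ) (min i j),
      (RatFunc.X : RatFunc ℚ) ^ ((i - k) * (j - k)) *
        qbin (M - i - j + k) k * qbin (M - j) (i - k) * qbin (L - i) (j - k) =
    qbin L j * qbin (M - j) i :=
  double_bounded_key_identity_polynomial_general M j (by omega)
end

section
/- For all integers i, j ≥ 0, the identity \sum_{k=0}^{\min(i,j)} q^{T_{i+j-k} + T_k} / ((q)_{i-k} (q)_{j-k} (q)_k) = q^{T_i + T_j} / ((q)_i (q)_j) holds as an identity of formal power series in q. (This is the key identity underlying Schur's theorem: multiplying by A^i B^j and summing over i, j ≥ 0 yields ∏_{m=1}^{∞}(1+Aq^m)(1+Bq^m).) -/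
open Finset

/-- `(q)_n = (q;q)_n = ∏_{t=0}^{n-1} (1 - q^{t+1})` as a formal power series over `ℚ`. -/
noncomputable def qPochPS (n : ℕ) : PowerSeries ℚ :=
  ∏ t ∈ Finset.range n, (1 - (PowerSeries.X : PowerSeries ℚ) ^ (t + 1))

/-- `T n = n(n+1)/2`, the n-th triangular number. -/
def tri (n : ℕ) : ℕ := n * (n + 1) / 2

/-!
Since `T_{i+j-k} + T_k = T_i + T_j + (i-k)(j-k)`, the factor `q^{T_i+T_j}` cancels. By symmetry let
`j = i + d`, and put `m = i - k`. Multiplying by `(q)_i (q)_{i+d}` leaves, at `y = q^d`, the finite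
Cauchy identity
  `∑_m [i choose m]_q q^{m²} y^m (1 - y q^{m+1}) ⋯ (1 - y q^i) = 1`,
whose left side `S_i(y)` satisfies `S_{i+1}(y) = (1 - y q^{i+1}) S_i(y) + y q^{i+1} S_i(y q)` by the
`q`-Pascal rule.
-/

/-- The `q`-shifted factorial `(a;q)_n = ∏_{t=0}^{n-1} (1 - a q^t)`; thus `(q)_n` is
`qPochhammer q q n`. -/
def qPochhammer {R : Type*} [CommRing R] (a q : R) (n : ℕ) : R :=
  ∏ t ∈ range n, (1 - a * q ^ t)

/-- The Gaussian binomial coefficient `[n choose k]_q`. It is defined by the `q`-Pascal rule rather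
than as a quotient of `q`-factorials, so that `q` may be an element of any semiring. -/
def qBinom {R : Type*} [Semiring R] (q : R) : ℕ → ℕ → R
  | _, 0 => 1
  | 0, _ + 1 => 0
  | n + 1, k + 1 => qBinom q n (k + 1) + q ^ (n - k) * qBinom q n k

section QBinomSemiring

variable {R : Type*} [Semiring R] (q : R)

@[simp]
theorem qBinom_zero_right (n : ℕ) : qBinom q n 0 = 1 := by
  cases n <;> rfl

theorem qBinom_succ_succ (n k : ℕ) :
    qBinom q (n + 1) (k + 1) = qBinom q n (k + 1) + q ^ (n - k) * qBinom q n k :=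
  rfl

theorem qBinom_eq_zero_of_lt {n k : ℕ} (h : n < k) : qBinom q n k = 0 := by
  induction n generalizing k with
  | zero => obtain ⟨k, rfl⟩ := Nat.exists_eq_add_of_lt h; rw [zero_add, qBinom]
  | succ n ih =>
    obtain ⟨k, rfl⟩ := Nat.exists_eq_succ_of_ne_zero (Nat.ne_zero_of_lt h)
    rw [qBinom_succ_succ, ih (by lia), ih (by lia), mul_zero, add_zero]

@[simp]
theorem qBinom_self (n : ℕ) : qBinom q n n = 1 := by
  induction n with
  | zero => simp
  | succ n ih => simp [qBinom_succ_succ, ih, qBinom_eq_zero_of_lt]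

end QBinomSemiring

section CommRing

variable {R : Type*} [CommRing R]

@[simp]
theorem qPochhammer_zero (a q : R) : qPochhammer a q 0 = 1 :=
  prod_range_zero _

theorem qPochhammer_succ (a q : R) (n : ℕ) :
    qPochhammer a q (n + 1) = qPochhammer a q n * (1 - a * q ^ n) :=
  prod_range_succ _ n

theorem qPochhammer_add (a q : R) (m n : ℕ) :
    qPochhammer a q (m + n) = qPochhammer a q m * qPochhammer (a * q ^ m) q n := by
  simp only [qPochhammer, prod_range_add, pow_add, mul_assoc]

theorem qBinom_mul_qPochhammer_mul_qPochhammer (q : R) (m n : ℕ) :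
    qBinom q (m + n) m * (qPochhammer q q m * qPochhammer q q n) = qPochhammer q q (m + n) := by
  induction m generalizing n with
  | zero => simp
  | succ m ihm =>
    induction n with
    | zero => simp
    | succ n ihn =>
      have pascal : qBinom q (m + 1 + (n + 1)) (m + 1) =
          qBinom q (m + 1 + n) (m + 1) + q ^ (n + 1) * qBinom q (m + (n + 1)) m := by
        rw [← add_assoc, qBinom_succ_succ, show m + 1 + n - m = n + 1 by lia,
          show m + 1 + n = m + (n + 1) by lia]
      have ihm := ihm (n + 1)
      rw [show m + (n + 1) = m + 1 + n by lia] at ihm pascal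
      rw [pascal, ← add_assoc (m + 1), qPochhammer_succ q q (m + 1 + n)]
      rw [qPochhammer_succ q q n] at ihm ⊢
      rw [qPochhammer_succ q q m] at ihn ⊢
      linear_combination (1 - q * q ^ n) * ihn + q ^ (n + 1) * (1 - q * q ^ m) * ihm

/-- The `m`-th summand `[n choose m]_q q^{m²} y^m (y q^{m+1};q)_{n-m}` of the finite Cauchy
identity. -/
def cauchyTerm (q y : R) (n m : ℕ) : R :=
  qBinom q n m * (q ^ (m * m) * y ^ m) * qPochhammer (y * q ^ (m + 1)) q (n - m)

theorem cauchyTerm_eq_zero_of_lt (q y : R) {n m : ℕ} (h : n < m) : cauchyTerm q y n m = 0 := by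
  simp only [cauchyTerm, qBinom_eq_zero_of_lt q h, zero_mul]

theorem qBinom_mul_qPochhammer_succ_sub (q y : R) (n m : ℕ) :
    qBinom q n m * qPochhammer (y * q ^ (m + 1)) q (n + 1 - m) =
      (1 - y * q ^ (n + 1)) * (qBinom q n m * qPochhammer (y * q ^ (m + 1)) q (n - m)) := by
  rcases lt_or_ge n m with h | h
  · simp only [qBinom_eq_zero_of_lt q h, zero_mul, mul_zero]
  · obtain ⟨k, rfl⟩ := Nat.exists_eq_add_of_le h
    rw [show m + k + 1 - m = k + 1 by lia, Nat.add_sub_cancel_left, qPochhammer_succ]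
    ring

theorem cauchyTerm_succ_zero (q y : R) (n : ℕ) :
    cauchyTerm q y (n + 1) 0 = (1 - y * q ^ (n + 1)) * cauchyTerm q y n 0 := by
  simpa [cauchyTerm] using qBinom_mul_qPochhammer_succ_sub q y n 0

theorem cauchyTerm_succ_succ (q y : R) {n m : ℕ} (h : m ≤ n) :
    cauchyTerm q y (n + 1) (m + 1) =
      (1 - y * q ^ (n + 1)) * cauchyTerm q y n (m + 1) +
        y * q ^ (n + 1) * cauchyTerm q (y * q) n m := by
  have upper := qBinom_mul_qPochhammer_succ_sub q y n (m + 1)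
  have base : y * q * q ^ (m + 1) = y * q ^ (m + 1 + 1) := by ring
  have weight : q ^ (n - m) * (q ^ ((m + 1) * (m + 1)) * y ^ (m + 1)) =
      y * q ^ (n + 1) * (q ^ (m * m) * (y * q) ^ m) := by
    obtain ⟨k, rfl⟩ := Nat.exists_eq_add_of_le h
    rw [Nat.add_sub_cancel_left]
    ring
  rw [Nat.add_sub_add_right] at upper
  simp only [cauchyTerm, qBinom_succ_succ, Nat.add_sub_add_right, base]
  linear_combination q ^ ((m + 1) * (m + 1)) * y ^ (m + 1) * upper +
    qBinom q n m * qPochhammer (y * q ^ (m + 1 + 1)) q (n - m) * weight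

theorem sum_cauchyTerm_succ (q y : R) (n : ℕ) :
    ∑ m ∈ range (n + 2), cauchyTerm q y (n + 1) m =
      (1 - y * q ^ (n + 1)) * ∑ m ∈ range (n + 1), cauchyTerm q y n m +
        y * q ^ (n + 1) * ∑ m ∈ range (n + 1), cauchyTerm q (y * q) n m := by
  have extend : ∑ m ∈ range (n + 1), cauchyTerm q y n m =
      ∑ m ∈ range (n + 1), cauchyTerm q y n (m + 1) + cauchyTerm q y n 0 := by
    rw [← sum_range_succ', sum_range_succ _ (n + 1), cauchyTerm_eq_zero_of_lt q y n.lt_succ_self,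
      add_zero]
  rw [sum_range_succ', cauchyTerm_succ_zero, extend,
    sum_congr rfl fun m hm => cauchyTerm_succ_succ q y (mem_range_succ_iff.mp hm),
    sum_add_distrib, ← mul_sum, ← mul_sum]
  ring

theorem sum_cauchyTerm (q y : R) (n : ℕ) : ∑ m ∈ range (n + 1), cauchyTerm q y n m = 1 := by
  induction n generalizing y with
  | zero => simp [cauchyTerm]
  | succ n ih => rw [sum_cauchyTerm_succ, ih, ih]; ring

section Reciprocals

/- `r n` stands for `1/(q)_n`, so that a power series ring is covered as well as a field. -/
variable {q : R} {r : ℕ → R} (hr : ∀ n, qPochhammer q q n * r n = 1)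

include hr

theorem qBinom_mul_reciprocal (m n : ℕ) : qBinom q (m + n) m * r (m + n) = r m * r n := by
  have h := qBinom_mul_qPochhammer_mul_qPochhammer q m n
  calc qBinom q (m + n) m * r (m + n)
      = qBinom q (m + n) m * (qPochhammer q q m * r m) * (qPochhammer q q n * r n) *
          r (m + n) := by rw [hr, hr, mul_one, mul_one]
    _ = qPochhammer q q (m + n) * r (m + n) * (r m * r n) := by rw [← h]; ring
    _ = r m * r n := by rw [hr, one_mul]

theorem qPochhammer_mul_reciprocal (m n : ℕ) :
    qPochhammer (q * q ^ m) q n * r (m + n) = r m := by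
  calc qPochhammer (q * q ^ m) q n * r (m + n)
      = qPochhammer q q m * r m * (qPochhammer (q * q ^ m) q n * r (m + n)) := by
        rw [hr, one_mul]
    _ = qPochhammer q q (m + n) * r (m + n) * r m := by rw [qPochhammer_add]; ring
    _ = r m := by rw [hr, one_mul]

theorem cauchyTerm_mul_reciprocals (d : ℕ) {n m : ℕ} (h : m ≤ n) :
    cauchyTerm q (q ^ d) n m * (r n * r (n + d)) =
      q ^ (m * (m + d)) * r m * r (m + d) * r (n - m) := by
  obtain ⟨k, rfl⟩ := Nat.exists_eq_add_of_le h
  have base : q ^ d * q ^ (m + 1) = q * q ^ (m + d) := by ring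
  have weight : q ^ (m * m) * (q ^ d) ^ m = q ^ (m * (m + d)) := by ring
  have binom := qBinom_mul_reciprocal hr m k
  have poch := qPochhammer_mul_reciprocal hr (m + d) k
  rw [add_right_comm] at poch
  rw [cauchyTerm, Nat.add_sub_cancel_left, base, weight]
  calc _ = q ^ (m * (m + d)) * (qBinom q (m + k) m * r (m + k)) *
          (qPochhammer (q * q ^ (m + d)) q k * r (m + k + d)) := by ring
    _ = _ := by rw [binom, poch]; ring

theorem sum_pow_mul_reciprocals (n d : ℕ) :
    ∑ m ∈ range (n + 1), q ^ (m * (m + d)) * r m * r (m + d) * r (n - m) = r n * r (n + d) := by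
  rw [← sum_congr rfl fun m hm => cauchyTerm_mul_reciprocals hr d (mem_range_succ_iff.mp hm),
    ← sum_mul, sum_cauchyTerm, one_mul]

end Reciprocals

end CommRing

theorem tri_add (m n : ℕ) : tri (m + n) = tri m + tri n + m * n := by
  have two_mul_tri (n : ℕ) : 2 * tri n = n * (n + 1) :=
    Nat.two_mul_div_two_of_even n.even_mul_succ_self
  linarith [two_mul_tri m, two_mul_tri n, two_mul_tri (m + n)]

theorem tri_add_sub_add_tri {i j k : ℕ} (hi : k ≤ i) (hj : k ≤ j) :
    tri (i + j - k) + tri k = tri i + tri j + (i - k) * (j - k) := by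
  obtain ⟨a, rfl⟩ := Nat.exists_eq_add_of_le hi
  obtain ⟨b, rfl⟩ := Nat.exists_eq_add_of_le hj
  rw [show k + a + (k + b) - k = k + (a + b) by lia, Nat.add_sub_cancel_left,
    Nat.add_sub_cancel_left]
  simp only [tri_add]
  ring

theorem qPochhammer_X_mul_inv_qPochPS (n : ℕ) :
    qPochhammer PowerSeries.X PowerSeries.X n * (qPochPS n)⁻¹ = 1 := by
  have poch_eq : qPochhammer PowerSeries.X PowerSeries.X n = qPochPS n := by
    simp only [qPochhammer, qPochPS, pow_succ']
  have constantCoeff_ne_zero : PowerSeries.constantCoeff (qPochPS n) ≠ 0 := by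
    simp [qPochPS, map_prod]
  rw [poch_eq, PowerSeries.mul_inv_cancel _ constantCoeff_ne_zero]

theorem schur_key_identity_general {R : Type*} [CommRing R] {q : R} {r : ℕ → R}
    (hr : ∀ n, qPochhammer q q n * r n = 1) (i j : ℕ) :
    ∑ k ∈ range (min i j + 1), q ^ (tri (i + j - k) + tri k) * r (i - k) * r (j - k) * r k =
      q ^ (tri i + tri j) * (r i * r j) := by
  wlog hij : i ≤ j generalizing i j
  · have swapped := this j i (le_of_not_ge hij)
    rw [min_comm, add_comm j i, add_comm (tri j), mul_comm (r j)] at swapped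
    simpa only [mul_right_comm] using swapped
  obtain ⟨d, rfl⟩ := Nat.exists_eq_add_of_le hij
  rw [min_eq_left hij, ← sum_pow_mul_reciprocals hr, mul_sum, ← sum_flip]
  refine sum_congr rfl fun m hm => ?_
  have hmi : m ≤ i := mem_range_succ_iff.mp hm
  rw [tri_add_sub_add_tri (Nat.sub_le i m) ((Nat.sub_le i m).trans hij), pow_add,
    Nat.sub_sub_self hmi, show i + d - (i - m) = m + d by lia]
  ring

/-- The key identity (1.1)/(2.6) underlying Schur's theorem: for `i, j ≥ 0`,
`∑_{k=0}^{min(i,j)} q^{T_{i+j-k}+T_k} / ((q)_{i-k} (q)_{j-k} (q)_k)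
  = q^{T_i+T_j} / ((q)_i (q)_j)` as formal power series in `q`. -/
theorem schur_key_identity (i j : ℕ) :
    ∑ k ∈ Finset.range (min i j + 1),
      (PowerSeries.X : PowerSeries ℚ) ^ (tri (i + j - k) + tri k) *
        (qPochPS (i - k))⁻¹ * (qPochPS (j - k))⁻¹ * (qPochPS k)⁻¹ =
    (PowerSeries.X : PowerSeries ℚ) ^ (tri i + tri j) * ((qPochPS i)⁻¹ * (qPochPS j)⁻¹) :=
  schur_key_identity_general qPochhammer_X_mul_inv_qPochPS i j
end

section
/- Let L, M, i, j be non-negative integers with M ≥ L ≥ i+j. Let P(n; i, j, L, M) denote the number of partitions of n into i distinct parts ≡ 1 (mod 3) each ≤ 3(M−j)−2 together with j distinct parts ≡ 2 (mod 3) each ≤ 3L−1. For non-negative integers r, s, t, l, let G(n; r, s, t, l, L, M) denote the number of partitions of n into parts such that any two consecutive parts differ by at least 3, with difference strictly greater than 3 whenever the larger part is a multiple of 3, having exactly r parts ≡ 1 (mod 3) each ≤ 3M−2, exactly s parts ≡ 2 (mod 3) each ≤ 3(L−l)−1, exactly t parts ≡ 0 (mod 3) each ≤ 3M−3, such that exactly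 l parts are > 3(L−l)+2 and no part equals 3(L−l) or 3(L−l)+1. Then P(n; i, j, L, M) = \sum_{r+t=i, s+t=j} \sum_{l ≥ 0} G(n; r, s, t, l, L, M). -/
/-- `P n i j L M`: the number of partitions of `n` (strictly decreasing lists of positive
integers) consisting of `i` distinct parts `≡ 1 (mod 3)`, each `≤ 3(M-j) - 2`, together
with `j` distinct parts `≡ 2 (mod 3)`, each `≤ 3L - 1` (and no parts `≡ 0 (mod 3)`). -/
noncomputable def schurP (n i j L M : ℕ) : ℕ :=
  {π : List ℕ | π.Chain' (· > ·) ∧ (∀ x ∈ π, 0 < x) ∧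
    (∀ x ∈ π, x % 3 = 1 ∨ x % 3 = 2) ∧
    (π.filter (fun x => x % 3 = 1)).length = i ∧
    (∀ x ∈ π, x % 3 = 1 → (x : ℤ) ≤ 3 * ((M : ℤ) - (j : ℤ)) - 2) ∧
    (π.filter (fun x => x % 3 = 2)).length = j ∧
    (∀ x ∈ π, x % 3 = 2 → (x : ℤ) ≤ 3 * (L : ℤ) - 1) ∧
    π.sum = n}.ncard

/-- `G n r s t l L M`: the number of partitions of `n` into parts such that consecutive
parts differ by `≥ 3`, strictly `> 3` when the larger part is a multiple of 3, having
exactly `r` parts `≡ 1 (mod 3)` each `≤ 3M - 2`, exactly `s` parts `≡ 2 (mod 3)` each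
`≤ 3(L-l) - 1`, exactly `t` parts `≡ 0 (mod 3)` each `≤ 3M - 3`, such that exactly `l`
parts are `> 3(L-l) + 2` and no part equals `3(L-l)` or `3(L-l) + 1`. -/
noncomputable def schurG (n r s t l L M : ℕ) : ℕ :=
  {π : List ℕ | (∀ x ∈ π, 0 < x) ∧
    π.Chain' (fun x y => y + 3 ≤ x ∧ (x % 3 = 0 → y + 3 < x)) ∧
    (π.filter (fun x => x % 3 = 1)).length = r ∧
    (∀ x ∈ π, x % 3 = 1 → (x : ℤ) ≤ 3 * (M : ℤ) - 2) ∧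
    (π.filter (fun x => x % 3 = 2)).length = s ∧
    (∀ x ∈ π, x % 3 = 2 → (x : ℤ) ≤ 3 * ((L : ℤ) - (l : ℤ)) - 1) ∧
    (π.filter (fun x => x % 3 = 0)).length = t ∧
    (∀ x ∈ π, x % 3 = 0 → (x : ℤ) ≤ 3 * (M : ℤ) - 3) ∧
    (π.filter (fun x => 3 * ((L : ℤ) - (l : ℤ)) + 2 < (x : ℤ))).length = l ∧
    (∀ x ∈ π, (x : ℤ) ≠ 3 * ((L : ℤ) - (l : ℤ)) ∧ (x : ℤ) ≠ 3 * ((L : ℤ) - (l : ℤ)) + 1) ∧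
    π.sum = n}.ncard

/-!
Both sides are compared through their generating functions in `q`. The partitions counted by
`schurP` split by residue, so their generating function is a product of two elementary symmetric
functions in a geometric progression, that is, of two `q³`-binomial coefficients.

For the other side, give a part `≡ 1` the colour `(1, 0)`, a part `≡ 2` the colour `(0, 1)` and a
multiple of `3` the colour `(1, 1)`; the condition `r + t = i`, `s + t = j` then says that the total
colour is `(i, j)`. Call a part tall if it exceeds `3(L - l) + 2`. Deleting a largest part in
`{3M - 2, 3M - 3}`, which is tall, lowers `l` and `L` together and so leaves the gap at
`3(L - l)`, `3(L - l) + 1` in place. Summed over `l`, this is a recurrence in `M` that the product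
also satisfies, by the two `q³`-Pascal rules. At `M = L` the `l` tall parts do not fit between
`3(L - l) + 3` and `3L - 2` unless `l = 0`, and what remains is Alladi's bounded form of Schur's
theorem, proved by the same recurrence on the largest part.
-/

open PowerSeries

section ListGF

/-- The generating function `∑ q ^ |π|` of a finite set of lists of parts, where `|π|` is the
sum of the parts. -/
noncomputable def listGF (𝓐 : Set (List ℕ)) : ℕ⟦X⟧ := ∑ᶠ π ∈ 𝓐, X ^ π.sum

variable {𝓐 𝓑 : Set (List ℕ)}

lemma coeff_listGF (h𝓐 : 𝓐.Finite) (n : ℕ) :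
    coeff n (listGF 𝓐) = {π ∈ 𝓐 | π.sum = n}.ncard := by
  lift 𝓐 to Finset (List ℕ) using h𝓐
  simp only [listGF, Finset.mem_coe, finsum_mem_finset_eq_sum, map_sum, coeff_X_pow,
    ← Finset.coe_filter, Set.ncard_coe_finset, Finset.card_filter, eq_comm]

@[simp] lemma listGF_empty : listGF ∅ = 0 := finsum_mem_empty

@[simp] lemma listGF_singleton_nil : listGF {[]} = 1 := by simp [listGF]

lemma listGF_union (hd : Disjoint 𝓐 𝓑) (h𝓐 : 𝓐.Finite) (h𝓑 : 𝓑.Finite) :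
    listGF (𝓐 ∪ 𝓑) = listGF 𝓐 + listGF 𝓑 :=
  finsum_mem_union hd h𝓐 h𝓑

lemma listGF_image_cons (a : ℕ) (h𝓐 : 𝓐.Finite) :
    listGF ((a :: ·) '' 𝓐) = X ^ a * listGF 𝓐 := by
  lift 𝓐 to Finset (List ℕ) using h𝓐
  rw [listGF, finsum_mem_image List.cons_injective.injOn]
  simp [listGF, finsum_mem_finset_eq_sum, Finset.mul_sum, pow_add]

end ListGF

section WeightedChains

variable {V : Type*} [AddCommMonoid V]

/-- The lists of parts taken from `S`, any earlier part being in relation `R` to any later one,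
of total weight `v`. When `R` refines `>`, these are partitions into distinct parts. -/
def weightedChains (R : ℕ → ℕ → Prop) (S : Finset ℕ) (w : ℕ → V) (v : V) : Set (List ℕ) :=
  {π | π.Pairwise R ∧ (∀ x ∈ π, x ∈ S) ∧ (π.map w).sum = v}

variable {R : ℕ → ℕ → Prop} {S : Finset ℕ} {a : ℕ} {w : ℕ → V} {v : V}

lemma finite_weightedChains (hR : ∀ x y, R x y → y < x) : (weightedChains R S w v).Finite := by
  refine (S.sort (· ≥ ·)).sublists.finite_toSet.subset ?_
  rintro π ⟨hπ, hS, -⟩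
  have hgt : π.Pairwise (· > ·) := hπ.imp (hR _ _)
  have hsub : π.Subperm (S.sort (· ≥ ·)) :=
    List.subperm_of_subset (hgt.imp ne_of_gt) fun x hx => by simpa using hS x hx
  exact List.mem_sublists.2 <|
    List.sublist_of_subperm_of_pairwise hsub (hgt.imp le_of_lt) (S.pairwise_sort _)

lemma listGF_weightedChains_empty [DecidableEq V] :
    listGF (weightedChains R ∅ w v) = if v = 0 then 1 else 0 := by
  have hnil {π : List ℕ} (hπ : π ∈ weightedChains R ∅ w v) : π = [] :=
    List.eq_nil_iff_forall_not_mem.2 fun x hx => Finset.notMem_empty x (hπ.2.1 x hx)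
  have hmem : ([] : List ℕ) ∈ weightedChains R ∅ w v ↔ v = 0 := by
    simp [weightedChains, eq_comm]
  split_ifs with hv
  · rw [Set.eq_singleton_iff_unique_mem.2 ⟨hmem.2 hv, fun _ => hnil⟩, listGF_singleton_nil]
  · rw [Set.eq_empty_of_forall_notMem fun π hπ => hv (hmem.1 (hnil hπ ▸ hπ)), listGF_empty]

lemma eq_head_of_forall_le {π : List ℕ} (hR : ∀ x y, R x y → y < x) (hπ : π.Pairwise R)
    (hle : ∀ x ∈ π, x ≤ a) (ha : a ∈ π) : ∃ τ, π = a :: τ := by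
  obtain - | ⟨b, τ⟩ := π
  · simp at ha
  obtain rfl | haτ := List.mem_cons.1 ha
  · exact ⟨τ, rfl⟩
  · have := hR _ _ ((List.pairwise_cons.1 hπ).1 a haτ)
    exact absurd (hle b List.mem_cons_self) this.not_ge

lemma weightedChains_insert [IsLeftCancelAdd V] [DecidableRel R] (hR : ∀ x y, R x y → y < x)
    (hS : ∀ x ∈ S, x < a) :
    weightedChains R (insert a S) w (w a + v) =
      weightedChains R S w (w a + v) ∪ (a :: ·) '' weightedChains R {x ∈ S | R a x} w v := by
  ext π
  constructor
  · rintro ⟨hπ, hins, hw⟩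
    have hle : ∀ x ∈ π, x ≤ a := fun x hx =>
      (Finset.mem_insert.1 (hins x hx)).elim le_of_eq fun h => (hS x h).le
    by_cases ha : a ∈ π
    · obtain ⟨τ, rfl⟩ := eq_head_of_forall_le hR hπ hle ha
      rw [List.pairwise_cons] at hπ
      refine .inr ⟨τ, ⟨hπ.2, fun x hx => ?_, by simpa using hw⟩, rfl⟩
      have hRx := hπ.1 x hx
      exact Finset.mem_filter.2
        ⟨Finset.mem_of_mem_insert_of_ne (hins x (.tail _ hx)) (hR _ _ hRx).ne, hRx⟩
    · exact .inl ⟨hπ, fun x hx =>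
        Finset.mem_of_mem_insert_of_ne (hins x hx) (ne_of_mem_of_not_mem hx ha), hw⟩
  · rintro (⟨hπ, hmem, hw⟩ | ⟨τ, ⟨hτ, hmem, hw⟩, rfl⟩)
    · exact ⟨hπ, fun x hx => Finset.mem_insert_of_mem (hmem x hx), hw⟩
    · simp only [Finset.mem_filter] at hmem
      exact ⟨List.pairwise_cons.2 ⟨fun x hx => (hmem x hx).2, hτ⟩,
        List.forall_mem_cons.2
          ⟨Finset.mem_insert_self _ _, fun x hx => Finset.mem_insert_of_mem (hmem x hx).1⟩,
        by simp [hw]⟩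

lemma listGF_weightedChains_insert [IsLeftCancelAdd V] [DecidableRel R]
    (hR : ∀ x y, R x y → y < x) (hS : ∀ x ∈ S, x < a) :
    listGF (weightedChains R (insert a S) w (w a + v)) =
      listGF (weightedChains R S w (w a + v)) +
        X ^ a * listGF (weightedChains R {x ∈ S | R a x} w v) := by
  have hdisj : Disjoint (weightedChains R S w (w a + v))
      ((a :: ·) '' weightedChains R {x ∈ S | R a x} w v) := by
    rw [Set.disjoint_left]
    rintro - ⟨-, hmem, -⟩ ⟨τ, -, rfl⟩
    exact (hS a (hmem a List.mem_cons_self)).false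
  rw [weightedChains_insert hR hS, listGF_union hdisj (finite_weightedChains hR)
    ((finite_weightedChains hR).image _), listGF_image_cons a (finite_weightedChains hR)]

lemma weightedChains_insert_of_not_le [Preorder V] [CanonicallyOrderedAdd V] (h : ¬ w a ≤ v) :
    weightedChains R (insert a S) w v = weightedChains R S w v := by
  ext π
  refine ⟨fun ⟨hπ, hins, hw⟩ => ⟨hπ, fun x hx => ?_, hw⟩, fun ⟨hπ, hmem, hw⟩ =>
    ⟨hπ, fun x hx => Finset.mem_insert_of_mem (hmem x hx), hw⟩⟩
  refine Finset.mem_of_mem_insert_of_ne (hins x hx) ?_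
  rintro rfl
  exact h (hw ▸ List.le_sum_of_mem (List.mem_map_of_mem hx))

end WeightedChains

section Esymm

variable {A : Type*} [CommSemiring A]

lemma esymm_zero_right (s : Multiset A) : s.esymm 0 = 1 := by
  simp [Multiset.esymm]

lemma esymm_eq_zero_of_card_lt {s : Multiset A} {i : ℕ} (h : s.card < i) : s.esymm i = 0 := by
  simp [Multiset.esymm, Multiset.powersetCard_eq_empty i h]

lemma esymm_cons_succ (a : A) (s : Multiset A) (i : ℕ) :
    (a ::ₘ s).esymm (i + 1) = s.esymm (i + 1) + a * s.esymm i := by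
  simp [Multiset.esymm, Multiset.powersetCard_cons, Multiset.sum_map_mul_left]

lemma esymm_insert_val_succ {σ : Type*} [DecidableEq σ] {a : σ} {s : Finset σ} (ha : a ∉ s)
    (f : σ → A) (i : ℕ) :
    ((insert a s).val.map f).esymm (i + 1) =
      (s.val.map f).esymm (i + 1) + f a * (s.val.map f).esymm i := by
  rw [Finset.insert_val_of_notMem ha, Multiset.map_cons, esymm_cons_succ]

/-- The elementary symmetric function `eᵢ(x, xy, …, xyᵐ⁻¹)`, a `y`-binomial coefficient
`[m choose i]` up to a monomial factor. -/
def geomEsymm (x y : A) (m i : ℕ) : A :=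
  ((Multiset.range m).map fun k => x * y ^ k).esymm i

variable (x y : A) (m i : ℕ)

@[simp] lemma geomEsymm_zero_right : geomEsymm x y m 0 = 1 := esymm_zero_right _

variable {m i} in
lemma geomEsymm_eq_zero_of_lt (h : m < i) : geomEsymm x y m i = 0 :=
  esymm_eq_zero_of_card_lt (by simpa using h)

lemma geomEsymm_succ_succ :
    geomEsymm x y (m + 1) (i + 1) =
      geomEsymm x y m (i + 1) + x * y ^ m * geomEsymm x y m i := by
  simp [geomEsymm, esymm_cons_succ]

lemma geomEsymm_mul_left : geomEsymm (y * x) y m i = y ^ i * geomEsymm x y m i := by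
  simp [geomEsymm, ← smul_eq_mul, Multiset.pow_smul_esymm]

lemma geomEsymm_succ_succ' :
    geomEsymm x y (m + 1) (i + 1) =
      y ^ (i + 1) * geomEsymm x y m (i + 1) + x * y ^ i * geomEsymm x y m i := by
  have hcons : (Multiset.range (m + 1)).map (fun k => x * y ^ k) =
      x ::ₘ (Multiset.range m).map fun k => y * x * y ^ k := by
    simp only [← Multiset.coe_range, List.range_succ_eq_map, Multiset.map_coe, List.map_cons,
      List.map_map, Multiset.cons_coe, pow_zero, mul_one, Function.comp_def, Nat.succ_eq_add_one,
      pow_succ', mul_left_comm x, mul_assoc y]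
  have hshift : geomEsymm x y (m + 1) (i + 1) =
      geomEsymm (y * x) y m (i + 1) + x * geomEsymm (y * x) y m i := by
    rw [geomEsymm, hcons, esymm_cons_succ, geomEsymm, geomEsymm]
  rw [hshift, geomEsymm_mul_left, geomEsymm_mul_left]
  ring

end Esymm

section ProductSide

/-- The Alladi–Gordon colours of a part: residues `1` and `2` modulo `3` are the primary colours
`(1, 0)` and `(0, 1)`, and multiples of `3` carry the secondary colour `(1, 1)`. -/
def colour (x : ℕ) : ℕ × ℕ := (if x % 3 = 2 then 0 else 1, if x % 3 = 1 then 0 else 1)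

lemma listGF_weightedChains_gt {w : ℕ → ℕ × ℕ} {S : Finset ℕ}
    (hw : ∀ x ∈ S, w x = (1, 0) ∨ w x = (0, 1)) (i j : ℕ) :
    listGF (weightedChains (· > ·) S w (i, j)) =
      ({x ∈ S | w x = (1, 0)}.val.map (X ^ ·)).esymm i *
        ({x ∈ S | w x = (0, 1)}.val.map (X ^ ·)).esymm j := by
  induction S using Finset.induction_on_max generalizing i j with
  | empty =>
    have hzero (k : ℕ) : (0 : Multiset ℕ⟦X⟧).esymm (k + 1) = 0 :=
      esymm_eq_zero_of_card_lt (by simp)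
    rw [listGF_weightedChains_empty]
    rcases i with _ | i <;> rcases j with _ | j <;> simp [esymm_zero_right, hzero]
  | insert a S ha ih =>
    have hfresh (c : ℕ × ℕ) : a ∉ ({x ∈ S | w x = c} : Finset ℕ) := fun h =>
      (ha a (Finset.mem_filter.1 h).1).false
    have hstep (v : ℕ × ℕ) : listGF (weightedChains (· > ·) (insert a S) w (w a + v)) =
        listGF (weightedChains (· > ·) S w (w a + v)) +
          X ^ a * listGF (weightedChains (· > ·) S w v) := by
      rw [listGF_weightedChains_insert (fun _ _ h => h) ha, Finset.filter_true_of_mem ha]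
    specialize ih fun x hx => hw x (Finset.mem_insert_of_mem hx)
    obtain hwa | hwa := hw a (Finset.mem_insert_self a S)
    · rw [Finset.filter_insert, Finset.filter_insert, if_pos hwa, if_neg (by simp [hwa])]
      rcases i with _ | i
      · rw [weightedChains_insert_of_not_le (by simp [hwa]), ih, esymm_zero_right,
          esymm_zero_right]
      · have := hstep (i, j)
        rw [hwa, ih, Prod.mk_add_mk, zero_add, add_comm 1, ih] at this
        rw [this, esymm_insert_val_succ (hfresh _)]
        ring
    · rw [Finset.filter_insert, Finset.filter_insert, if_pos hwa, if_neg (by simp [hwa])]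
      rcases j with _ | j
      · rw [weightedChains_insert_of_not_le (by simp [hwa]), ih, esymm_zero_right,
          esymm_zero_right]
      · have := hstep (i, j)
        rw [hwa, ih, Prod.mk_add_mk, zero_add, add_comm 1, ih] at this
        rw [this, esymm_insert_val_succ (hfresh _)]
        ring

lemma colour_three_mul_add_one (k : ℕ) : colour (3 * k + 1) = (1, 0) := by
  grind [colour]

lemma colour_three_mul_add_two (k : ℕ) : colour (3 * k + 2) = (0, 1) := by
  grind [colour]

lemma colour_three_mul (k : ℕ) : colour (3 * k) = (1, 1) := by
  grind [colour]

lemma colour_three_mul_add_three (k : ℕ) : colour (3 * k + 3) = (1, 1) :=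
  colour_three_mul (k + 1)

lemma sum_map_colour (π : List ℕ) :
    (π.map colour).sum =
      (π.countP (· % 3 = 1) + π.countP (· % 3 = 0),
        π.countP (· % 3 = 2) + π.countP (· % 3 = 0)) := by
  induction π with
  | nil => rfl
  | cons a π ih =>
    rw [List.map_cons, List.sum_cons, ih]
    have := Nat.mod_lt a three_pos
    interval_cases h : a % 3 <;> simp [colour, h, Prod.ext_iff] <;> omega

lemma listGF_weightedChains_gt_colour (m L i j : ℕ) :
    listGF (weightedChains (· > ·)
        ((Finset.range m).image (3 * · + 1) ∪ (Finset.range L).image (3 * · + 2)) colour (i, j)) =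
      geomEsymm X (X ^ 3) m i * geomEsymm (X ^ 2) (X ^ 3) L j := by
  set S := (Finset.range m).image (3 * · + 1) ∪ (Finset.range L).image (3 * · + 2)
  have hone : {x ∈ S | colour x = (1, 0)} = (Finset.range m).image (3 * · + 1) := by
    ext x
    grind [colour]
  have htwo : {x ∈ S | colour x = (0, 1)} = (Finset.range L).image (3 * · + 2) := by
    ext x
    grind [colour]
  rw [listGF_weightedChains_gt (by grind [colour]), hone, htwo, geomEsymm, geomEsymm,
    Finset.image_val_of_injOn (by simp), Finset.image_val_of_injOn (by simp), Multiset.map_map,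
    Multiset.map_map]
  simp only [Function.comp_def, Finset.range_val, pow_add, pow_mul, pow_one, mul_comm _ X,
    mul_comm _ (X ^ 2)]

/-- The generating function of the partitions counted by `schurP · i j L M`. -/
noncomputable def productGF (i j L M : ℕ) : ℕ⟦X⟧ :=
  geomEsymm X (X ^ 3) (M - j) i * geomEsymm (X ^ 2) (X ^ 3) L j

lemma schurP_eq_coeff_productGF (n i j L M : ℕ) :
    schurP n i j L M = coeff n (productGF i j L M) := by
  rw [productGF, ← listGF_weightedChains_gt_colour,
    coeff_listGF (finite_weightedChains fun _ _ h => h), schurP]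
  congr 1
  ext π
  have hmem (x : ℕ) :
      x ∈ (Finset.range (M - j)).image (3 * · + 1) ∪ (Finset.range L).image (3 * · + 2) ↔
        0 < x ∧ (x % 3 = 1 ∨ x % 3 = 2) ∧ (x % 3 = 1 → (x : ℤ) ≤ 3 * ((M : ℤ) - j) - 2) ∧
          (x % 3 = 2 → (x : ℤ) ≤ 3 * (L : ℤ) - 1) := by
    simp only [Finset.mem_union, Finset.mem_image, Finset.mem_range]
    constructor
    · rintro (⟨k, hk, rfl⟩ | ⟨k, hk, rfl⟩) <;> omega
    · rintro ⟨hpos, hres | hres, hone, htwo⟩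
      · exact .inl ⟨x / 3, by omega⟩
      · exact .inr ⟨x / 3, by omega⟩
  have hzero (hres : ∀ x ∈ π, x % 3 = 1 ∨ x % 3 = 2) : π.countP (· % 3 = 0) = 0 :=
    List.countP_eq_zero.2 fun x hx => by
      have := hres x hx
      grind
  simp only [weightedChains, Set.mem_ofPred_eq, sum_map_colour, Prod.mk.injEq, hmem,
    List.countP_eq_length_filter] at hzero ⊢
  constructor
  · rintro ⟨hπ, hpos, hres, hi, hone, hj, htwo, hsum⟩
    refine ⟨⟨List.isChain_iff_pairwise.1 hπ,
      fun x hx => ⟨hpos x hx, hres x hx, hone x hx, htwo x hx⟩, ?_, ?_⟩, hsum⟩ <;>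
      simpa [hzero hres]
  · rintro ⟨⟨hπ, hS, hi, hj⟩, hsum⟩
    have hres x hx := (hS x hx).2.1
    rw [hzero hres, add_zero] at hi hj
    exact ⟨List.isChain_iff_pairwise.2 hπ, fun x hx => (hS x hx).1, hres, hi,
      fun x hx => (hS x hx).2.2.1, hj, fun x hx => (hS x hx).2.2.2, hsum⟩

section Recurrences

variable (i j L M : ℕ)

lemma productGF_zero_zero : productGF i j 0 0 = if (i, j) = 0 then 1 else 0 := by
  rcases i with _ | i <;> rcases j with _ | j <;> simp [productGF, geomEsymm_eq_zero_of_lt]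

lemma productGF_zero_left (M' : ℕ) : productGF 0 j L M = productGF 0 j L M' := by
  simp [productGF]

lemma productGF_zero_right (L' : ℕ) : productGF i 0 L M = productGF i 0 L' M := by
  simp [productGF]

lemma productGF_succ_left_succ_right :
    productGF i (j + 1) (L + 1) (M + 1) =
      productGF i (j + 1) L (M + 1) + X ^ (3 * L + 2) * productGF i j L M := by
  simp only [productGF, geomEsymm_succ_succ, Nat.add_sub_add_right]
  ring

lemma productGF_zero_succ_right (L' : ℕ) :
    productGF (i + 1) 0 L (M + 1) =
      productGF (i + 1) 0 L M + X ^ (3 * M + 1) * productGF i 0 L' M := by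
  simp only [productGF, geomEsymm_succ_succ, geomEsymm_zero_right, Nat.sub_zero]
  ring

variable {L M} in
lemma productGF_succ_right (hLM : L ≤ M) :
    productGF (i + 1) (j + 1) (L + 1) (M + 2) =
      productGF (i + 1) (j + 1) (L + 1) (M + 1) +
        X ^ (3 * M + 4) * productGF i (j + 1) L (M + 1) +
          X ^ (3 * M + 3) * productGF i j L M := by
  obtain hLj | hjL := lt_or_ge L j
  · simp [productGF, geomEsymm_eq_zero_of_lt, hLj, hLj.trans (Nat.lt_succ_self j)]
  · obtain ⟨m, rfl⟩ := Nat.exists_eq_add_of_le (hjL.trans hLM)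
    have hsub : j + m + 2 - (j + 1) = m + 1 := by omega
    have hsub' : j + m + 1 - (j + 1) = m := by omega
    rw [productGF, hsub, productGF, hsub', productGF, hsub', productGF, Nat.add_sub_cancel_left,
      geomEsymm_succ_succ X, add_mul, geomEsymm_succ_succ' (X ^ 2)]
    ring

end Recurrences

end ProductSide

section SchurSide

/-- The gap condition of Schur's theorem between a part `x` and a smaller part `y`. -/
def SchurGap (x y : ℕ) : Prop := y + 3 ≤ x ∧ (x % 3 = 0 → y + 3 < x)

instance : DecidableRel SchurGap := fun _ _ => inferInstanceAs (Decidable (_ ∧ _))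

instance : IsTrans ℕ SchurGap := ⟨by grind [SchurGap]⟩

lemma lt_of_schurGap (x y : ℕ) (h : SchurGap x y) : y < x := by grind [SchurGap]

lemma schurGap_three_mul_add_one {L x : ℕ} : SchurGap (3 * L + 1) x ↔ x < 3 * L - 1 := by
  grind [SchurGap]

lemma schurGap_three_mul_add_two {L x : ℕ} : SchurGap (3 * L + 2) x ↔ x < 3 * L := by
  grind [SchurGap]

lemma schurGap_three_mul_add_three {L x : ℕ} : SchurGap (3 * L + 3) x ↔ x < 3 * L := by
  grind [SchurGap]

/-- The generating function of the Schur partitions with parts `< B` and total colour `v`. -/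
noncomputable def schurGF (B : ℕ) (v : ℕ × ℕ) : ℕ⟦X⟧ :=
  listGF (weightedChains SchurGap (Finset.Ico 1 B) colour v)

variable {a b : ℕ} {v : ℕ × ℕ}

lemma schurGF_succ (ha : 0 < a) (hb : ∀ x, SchurGap a x ↔ x < b) :
    schurGF (a + 1) (colour a + v) = schurGF a (colour a + v) + X ^ a * schurGF b v := by
  have hfilter : {x ∈ Finset.Ico 1 a | SchurGap a x} = Finset.Ico 1 b := by
    grind [lt_of_schurGap]
  rw [schurGF, ← Finset.insert_Ico_right_eq_Ico_add_one ha, listGF_weightedChains_insert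
    lt_of_schurGap (fun x hx => (Finset.mem_Ico.1 hx).2), hfilter, schurGF, schurGF]

lemma schurGF_succ_of_not_le (h : ¬ colour a ≤ v) : schurGF (a + 1) v = schurGF a v := by
  obtain rfl | ha := a.eq_zero_or_pos
  · rfl
  · rw [schurGF, ← Finset.insert_Ico_right_eq_Ico_add_one ha,
      weightedChains_insert_of_not_le h, schurGF]

variable (L i j : ℕ)

lemma schurGF_three_mul_add_two :
    schurGF (3 * L + 2) (i + 1, j) =
      schurGF (3 * L + 1) (i + 1, j) + X ^ (3 * L + 1) * schurGF (3 * L - 1) (i, j) := by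
  simpa [colour_three_mul_add_one, add_comm 1] using
    schurGF_succ (v := (i, j)) (Nat.succ_pos (3 * L)) fun _ => schurGap_three_mul_add_one

lemma schurGF_three_mul_add_three :
    schurGF (3 * L + 3) (i, j + 1) =
      schurGF (3 * L + 2) (i, j + 1) + X ^ (3 * L + 2) * schurGF (3 * L) (i, j) := by
  simpa [colour_three_mul_add_two, add_comm 1] using
    schurGF_succ (v := (i, j)) (Nat.succ_pos (3 * L + 1)) fun _ => schurGap_three_mul_add_two

lemma schurGF_three_mul_add_four :
    schurGF (3 * L + 4) (i + 1, j + 1) =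
      schurGF (3 * L + 3) (i + 1, j + 1) + X ^ (3 * L + 3) * schurGF (3 * L) (i, j) := by
  simpa [colour_three_mul_add_three, add_comm 1] using
    schurGF_succ (v := (i, j)) (Nat.succ_pos (3 * L + 2)) fun _ => schurGap_three_mul_add_three

lemma schurGF_zero : schurGF 0 (i, j) = productGF i j 0 0 := by
  rw [productGF_zero_zero, ← listGF_weightedChains_empty]
  rfl

lemma schurGF_two : schurGF 2 (i, j) = productGF i j 0 1 := by
  have hskip (i : ℕ) : schurGF 1 (i, j) = productGF i j 0 0 := schurGF_zero i j
  rcases i with _ | i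
  · rw [schurGF_succ_of_not_le (by simp [colour]), hskip, productGF_zero_left]
  rw [schurGF_three_mul_add_two 0, mul_zero, zero_add, hskip, zero_tsub, schurGF_zero]
  rcases j with _ | j
  · rw [productGF_zero_succ_right i 0 0 0]
  · simp [productGF, geomEsymm_eq_zero_of_lt]

variable {L}

lemma schurGF_three_mul_succ (hthree : ∀ i j, schurGF (3 * L) (i, j) = productGF i j L L)
    (htwo : ∀ i j, schurGF (3 * L + 2) (i, j) = productGF i j L (L + 1)) :
    schurGF (3 * (L + 1)) (i, j) = productGF i j (L + 1) (L + 1) := by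
  rw [mul_add_one]
  rcases j with _ | j
  · rw [schurGF_succ_of_not_le (by simp [colour_three_mul_add_two]), htwo,
      productGF_zero_right]
  · rw [schurGF_three_mul_add_three, htwo, hthree, productGF_succ_left_succ_right]

lemma schurGF_three_mul_succ_add_two
    (hthree : ∀ i j, schurGF (3 * L) (i, j) = productGF i j L L)
    (htwo : ∀ i j, schurGF (3 * L + 2) (i, j) = productGF i j L (L + 1))
    (hsucc : ∀ i j, schurGF (3 * (L + 1)) (i, j) = productGF i j (L + 1) (L + 1)) :
    schurGF (3 * (L + 1) + 2) (i, j) = productGF i j (L + 1) (L + 2) := by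
  have hsub : 3 * (L + 1) - 1 = 3 * L + 2 := by omega
  rcases i with _ | i
  · rw [schurGF_succ_of_not_le (by simp [colour_three_mul_add_one]),
      schurGF_succ_of_not_le (by simp [colour_three_mul]), hsucc, productGF_zero_left]
  rw [schurGF_three_mul_add_two, hsub, htwo]
  rcases j with _ | j
  · rw [schurGF_succ_of_not_le (by simp [colour_three_mul]), hsucc,
      productGF_zero_succ_right i (L + 1) (L + 1) L]
  · rw [mul_add_one, schurGF_three_mul_add_four, ← mul_add_one, hsucc, hthree,
      productGF_succ_right i j le_rfl]
    ring

/-- Alladi's bounded form of Schur's theorem. -/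
lemma schurGF_eq_productGF (L : ℕ) :
    (∀ i j, schurGF (3 * L) (i, j) = productGF i j L L) ∧
      ∀ i j, schurGF (3 * L + 2) (i, j) = productGF i j L (L + 1) := by
  induction L with
  | zero => exact ⟨schurGF_zero, schurGF_two⟩
  | succ L ih =>
    have hsucc i j := schurGF_three_mul_succ i j ih.1 ih.2
    exact ⟨hsucc, fun i j => schurGF_three_mul_succ_add_two i j ih.1 ih.2 hsucc⟩

end SchurSide

section GappedSide

/-- The parts `< B` that remain when `3K`, `3K + 1`, `3K + 2` and all larger parts `≡ 2 (mod 3)`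
are forbidden. -/
def gappedParts (K B : ℕ) : Finset ℕ :=
  {x ∈ Finset.Ico 1 B | 3 * K ≤ x → 3 * K + 3 ≤ x ∧ x % 3 ≠ 2}

/-- The colour of a part, preceded by `1` if the part lies above the gap `3K`, `3K + 1`,
`3K + 2` and by `0` otherwise. -/
def tallColour (K x : ℕ) : ℕ × ℕ × ℕ := (if 3 * K + 2 < x then 1 else 0, colour x)

/-- The generating function of the Schur partitions of total colour `v` with parts taken from
`gappedParts K B`, exactly `l` of which lie above the gap. -/
noncomputable def gappedGF (K B l : ℕ) (v : ℕ × ℕ) : ℕ⟦X⟧ :=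
  listGF (weightedChains SchurGap (gappedParts K B) (tallColour K) (l, v))

lemma sum_map_tallColour (K : ℕ) (π : List ℕ) :
    (π.map (tallColour K)).sum = (π.countP (3 * K + 2 < ·), (π.map colour).sum) := by
  induction π with
  | nil => rfl
  | cons x π ih => by_cases hx : 3 * K + 2 < x <;> simp [tallColour, hx, ih, add_comm 1]

variable {K a b l : ℕ} {v : ℕ × ℕ}

lemma gappedGF_succ (ha : 3 * K + 3 ≤ a) (hres : a % 3 ≠ 2) (hb : ∀ x, SchurGap a x ↔ x < b) :
    gappedGF K (a + 1) (l + 1) (colour a + v) =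
      gappedGF K a (l + 1) (colour a + v) + X ^ a * gappedGF K b l v := by
  have htall : (l + 1, colour a + v) = tallColour K a + (l, v) := by
    rw [tallColour, if_pos (by omega), add_comm l]
    rfl
  have hins : gappedParts K (a + 1) = insert a (gappedParts K a) := by
    grind [gappedParts]
  have hfilter : {x ∈ gappedParts K a | SchurGap a x} = gappedParts K b := by
    grind [gappedParts, lt_of_schurGap]
  rw [gappedGF, gappedGF, gappedGF, htall, hins, listGF_weightedChains_insert lt_of_schurGap
    (by grind [gappedParts]), hfilter]

lemma gappedGF_succ_of_notMem (ha : a ∉ gappedParts K (a + 1)) :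
    gappedGF K (a + 1) l v = gappedGF K a l v := by
  have hparts : gappedParts K (a + 1) = gappedParts K a := by
    grind [gappedParts]
  rw [gappedGF, hparts, gappedGF]

lemma gappedGF_succ_of_not_le (ha : ¬ tallColour K a ≤ (l, v)) :
    gappedGF K (a + 1) l v = gappedGF K a l v := by
  by_cases hmem : a ∈ gappedParts K (a + 1)
  · have hins : gappedParts K (a + 1) = insert a (gappedParts K a) := by
      grind [gappedParts]
    rw [gappedGF, hins, weightedChains_insert_of_not_le ha, gappedGF]
  · exact gappedGF_succ_of_notMem hmem

lemma gappedGF_three_mul_add_two {m : ℕ} (h : K ≤ m) :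
    gappedGF K (3 * (m + 1)) l v = gappedGF K (3 * m + 2) l v :=
  gappedGF_succ_of_notMem (by grind [gappedParts])

lemma gappedGF_three_mul_add_six {m i : ℕ} (j : ℕ) (h : K ≤ m) :
    gappedGF K (3 * (m + 2)) (l + 1) (i + 1, j) =
      gappedGF K (3 * m + 4) (l + 1) (i + 1, j) +
        X ^ (3 * m + 4) * gappedGF K (3 * (m + 1)) l (i, j) := by
  have hgap (x : ℕ) : SchurGap (3 * m + 4) x ↔ x < 3 * m + 2 :=
    schurGap_three_mul_add_one (L := m + 1)
  have hcolour : colour (3 * m + 4) = (1, 0) := colour_three_mul_add_one (m + 1)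
  have hstep := gappedGF_succ (K := K) (l := l) (v := (i, j)) (by omega) (by omega) hgap
  rw [hcolour, Prod.mk_add_mk, add_comm 1, zero_add] at hstep
  rw [gappedGF_three_mul_add_two (h.trans m.le_succ), gappedGF_three_mul_add_two h, ← hstep]
  rfl

lemma gappedGF_succ_succ_zero {m i : ℕ} (h : K ≤ m) :
    gappedGF K (3 * (m + 2)) (l + 1) (i + 1, 0) =
      gappedGF K (3 * (m + 1)) (l + 1) (i + 1, 0) +
        X ^ (3 * m + 4) * gappedGF K (3 * (m + 1)) l (i, 0) := by
  rw [gappedGF_three_mul_add_six 0 h, gappedGF_succ_of_not_le, mul_add_one]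
  simp [tallColour, colour_three_mul_add_three]

lemma gappedGF_succ_succ_succ {m i j : ℕ} (h : K ≤ m) :
    gappedGF K (3 * (m + 2)) (l + 1) (i + 1, j + 1) =
      gappedGF K (3 * (m + 1)) (l + 1) (i + 1, j + 1) +
        X ^ (3 * m + 4) * gappedGF K (3 * (m + 1)) l (i, j + 1) +
          X ^ (3 * m + 3) * gappedGF K (3 * m) l (i, j) := by
  have hstep := gappedGF_succ (K := K) (l := l) (v := (i, j)) (a := 3 * m + 3) (b := 3 * m)
    (by omega) (by omega) fun _ => schurGap_three_mul_add_three
  rw [colour_three_mul_add_three, Prod.mk_add_mk, add_comm 1, add_comm 1] at hstep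
  rw [gappedGF_three_mul_add_six _ h, hstep, mul_add_one]
  ring

lemma gappedGF_zero_tall {M : ℕ} (h : K ≤ M) : gappedGF K (3 * M) 0 v = schurGF (3 * K) v := by
  have hstable (B : ℕ) (hB : 3 * K ≤ B) : gappedGF K B 0 v = gappedGF K (3 * K) 0 v := by
    induction B, hB using Nat.le_induction with
    | base => rfl
    | succ B hB ih =>
      rw [← ih]
      obtain hlt | hle := lt_or_ge (3 * K + 2) B
      · exact gappedGF_succ_of_not_le (by simp [tallColour, hlt])
      · exact gappedGF_succ_of_notMem (by grind [gappedParts])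
  have hparts : gappedParts K (3 * K) = Finset.Ico 1 (3 * K) := by
    grind [gappedParts]
  rw [hstable _ (by omega), gappedGF, schurGF, hparts]
  congr 1
  ext π
  simp only [weightedChains, sum_map_tallColour, Set.mem_ofPred_eq, Prod.mk.injEq,
    List.countP_eq_zero]
  grind

lemma add_mul_length_le {b d : ℕ} {π : List ℕ}
    (hπ : (a :: π).Pairwise fun x y => y + d ≤ x) (hb : ∀ x ∈ a :: π, b ≤ x) :
    b + d * π.length ≤ a := by
  induction π generalizing a with
  | nil => simpa using hb
  | cons c π ih =>
    have hc := ih (List.pairwise_cons.1 hπ).2 fun x hx => hb x (.tail _ hx)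
    have hac := (List.pairwise_cons.1 hπ).1 c List.mem_cons_self
    rw [List.length_cons]
    linarith

lemma gappedGF_eq_zero {M : ℕ} (h : M ≤ K + l + 1) : gappedGF K (3 * M) (l + 1) v = 0 := by
  rw [gappedGF, ← listGF_empty]
  congr 1
  refine Set.eq_empty_of_forall_notMem fun π ⟨hπ, hmem, hsum⟩ => ?_
  rw [sum_map_tallColour, Prod.mk.injEq, List.countP_eq_length_filter] at hsum
  have hgap := (hπ.imp And.left).filter (3 * K + 2 < ·)
  obtain ⟨a, τ, hτ⟩ := List.exists_cons_of_length_eq_add_one hsum.1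
  have htall x (hx : x ∈ a :: τ) : x ∈ π ∧ 3 * K + 2 < x := by
    simpa [← hτ] using hx
  rw [hτ] at hgap hsum
  have hlower := add_mul_length_le hgap fun x hx => (htall x hx).2
  have hupper : a ∈ gappedParts K (3 * M) := hmem a (htall a List.mem_cons_self).1
  grind [gappedParts]

end GappedSide

section RefinedSum

/-- The generating function of the partitions on the Schur side of the refined theorem:
`l` is the number of parts above the gap, which then starts at `3(L - l)`. -/
noncomputable def refinedSchurGF (i j L M : ℕ) : ℕ⟦X⟧ :=
  ∑ l ∈ Finset.range (i + 1), gappedGF (L - l) (3 * M) l (i, j)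

variable {i j L M : ℕ}

lemma refinedSchurGF_succ (h : L ≤ M) :
    refinedSchurGF (i + 1) j L M =
      ∑ l ∈ Finset.range (i + 1), gappedGF (L - (l + 1)) (3 * M) (l + 1) (i + 1, j) +
        schurGF (3 * L) (i + 1, j) := by
  rw [refinedSchurGF, Finset.sum_range_succ', Nat.sub_zero, gappedGF_zero_tall h]

lemma refinedSchurGF_zero (h : L ≤ M) : refinedSchurGF 0 j L M = productGF 0 j L M := by
  rw [refinedSchurGF, zero_add, Finset.sum_range_one, Nat.sub_zero, gappedGF_zero_tall h,
    (schurGF_eq_productGF L).1, productGF_zero_left]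

lemma refinedSchurGF_self (h : i ≤ L) : refinedSchurGF i j L L = productGF i j L L := by
  obtain _ | i := i
  · exact refinedSchurGF_zero le_rfl
  rw [refinedSchurGF_succ le_rfl, (schurGF_eq_productGF L).1, Finset.sum_eq_zero, zero_add]
  exact fun l hl => gappedGF_eq_zero (by grind)

lemma refinedSchurGF_zero_succ_right (h : L ≤ M) :
    refinedSchurGF (i + 1) 0 (L + 1) (M + 2) =
      refinedSchurGF (i + 1) 0 (L + 1) (M + 1) +
        X ^ (3 * M + 4) * refinedSchurGF i 0 L (M + 1) := by
  have hstep (l : ℕ) := gappedGF_succ_succ_zero (l := l) (i := i) ((L.sub_le l).trans h)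
  rw [refinedSchurGF_succ (by omega), refinedSchurGF_succ (by omega), refinedSchurGF]
  simp only [Nat.add_sub_add_right, hstep, Finset.sum_add_distrib, ← Finset.mul_sum]
  ring

lemma refinedSchurGF_succ_right (h : L ≤ M) :
    refinedSchurGF (i + 1) (j + 1) (L + 1) (M + 2) =
      refinedSchurGF (i + 1) (j + 1) (L + 1) (M + 1) +
        X ^ (3 * M + 4) * refinedSchurGF i (j + 1) L (M + 1) +
          X ^ (3 * M + 3) * refinedSchurGF i j L M := by
  have hstep (l : ℕ) :=
    gappedGF_succ_succ_succ (l := l) (i := i) (j := j) ((L.sub_le l).trans h)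
  rw [refinedSchurGF_succ (by omega), refinedSchurGF_succ (by omega), refinedSchurGF,
    refinedSchurGF]
  simp only [Nat.add_sub_add_right, hstep, Finset.sum_add_distrib, ← Finset.mul_sum]
  ring

lemma refinedSchurGF_eq_productGF (hi : i ≤ L) (hLM : L ≤ M) :
    refinedSchurGF i j L M = productGF i j L M := by
  induction M using Nat.strong_induction_on generalizing i j L with
  | _ M ih =>
    obtain rfl | hlt := hLM.eq_or_lt
    · exact refinedSchurGF_self hi
    obtain _ | i := i
    · exact refinedSchurGF_zero hLM
    obtain ⟨L, rfl⟩ := Nat.exists_eq_add_of_le' (Nat.one_le_of_lt hi)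
    obtain ⟨M, rfl⟩ := Nat.exists_eq_add_of_le' (show 2 ≤ M by omega)
    have hi' := Nat.le_of_succ_le_succ hi
    obtain _ | j := j
    · rw [refinedSchurGF_zero_succ_right (by omega), ih (M + 1) (by omega) hi (by omega),
        ih (M + 1) (by omega) hi' (by omega), productGF_zero_succ_right i (L + 1) (M + 1) L]
      rfl
    · rw [refinedSchurGF_succ_right (by omega), ih (M + 1) (by omega) hi (by omega),
        ih (M + 1) (by omega) hi' (by omega), ih M (by omega) hi' (by omega),
        productGF_succ_right i j (by omega)]

end RefinedSum

section Coefficients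

lemma mem_gappedParts_sub {l L M x : ℕ} (hl : l ≤ L) (hLM : L ≤ M) :
    x ∈ gappedParts (L - l) (3 * M) ↔
      0 < x ∧ (x % 3 = 1 → (x : ℤ) ≤ 3 * (M : ℤ) - 2) ∧
        (x % 3 = 2 → (x : ℤ) ≤ 3 * ((L : ℤ) - (l : ℤ)) - 1) ∧
        (x % 3 = 0 → (x : ℤ) ≤ 3 * (M : ℤ) - 3) ∧
        (x : ℤ) ≠ 3 * ((L : ℤ) - (l : ℤ)) ∧ (x : ℤ) ≠ 3 * ((L : ℤ) - (l : ℤ)) + 1 := by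
  rw [gappedParts, Finset.mem_filter, Finset.mem_Ico]
  omega

-- In `schurG` the list `π` as a whole is coerced to `List ℤ` by the condition on its tall parts.
lemma coe_list_eq_map_cast (π : List ℕ) : (π : List ℤ) = π.map Nat.cast := by
  simp only [List.bind_eq_flatMap, List.pure_def, List.map_eq_flatMap]

lemma schurG_eq_ncard {l L M : ℕ} (hl : l ≤ L) (hLM : L ≤ M) (n r s t : ℕ) :
    schurG n r s t l L M =
      {π ∈ weightedChains SchurGap (gappedParts (L - l) (3 * M)) (tallColour (L - l))
        (l, r + t, s + t) | π.sum = n ∧ π.countP (· % 3 = 0) = t}.ncard := by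
  have htall (x : ℕ) : 3 * ((L : ℤ) - (l : ℤ)) + 2 < (x : ℤ) ↔ 3 * (L - l) + 2 < x := by omega
  have hchain (π : List ℕ) : π.IsChain SchurGap ↔ π.Pairwise SchurGap :=
    List.isChain_iff_pairwise
  rw [schurG]
  congr 1
  ext π
  simp only [weightedChains, sum_map_tallColour, sum_map_colour, Prod.mk.injEq,
    mem_gappedParts_sub hl hLM, Set.mem_ofPred_eq, coe_list_eq_map_cast,
    ← List.countP_eq_length_filter, List.countP_map, Function.comp_def, htall]
  constructor
  · rintro ⟨hpos, hgap, hr, hone, hs, htwo, ht, hzero, hl, hne, hsum⟩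
    exact ⟨⟨(hchain π).1 hgap, fun x hx => ⟨hpos x hx, hone x hx, htwo x hx, hzero x hx, hne x hx⟩,
      hl, by omega, by omega⟩, hsum, ht⟩
  · rintro ⟨⟨hgap, hmem, hl, hr, hs⟩, hsum, ht⟩
    simp only [forall₂_and] at hmem
    obtain ⟨hpos, hone, htwo, hzero, hne⟩ := hmem
    exact ⟨hpos, (hchain π).2 hgap, by omega, hone, by omega, htwo, ht, hzero, hl,
      forall₂_and.2 hne, hsum⟩

lemma coeff_gappedGF {l L M : ℕ} (hl : l ≤ L) (hLM : L ≤ M) (n i j : ℕ) :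
    coeff n (gappedGF (L - l) (3 * M) l (i, j)) =
      ∑ t ∈ Finset.range (min i j + 1), schurG n (i - t) (j - t) t l L M := by
  set 𝓐 := weightedChains SchurGap (gappedParts (L - l) (3 * M)) (tallColour (L - l)) (l, i, j)
    with h𝓐
  have hfin : {π ∈ 𝓐 | π.sum = n}.Finite :=
    (finite_weightedChains lt_of_schurGap).subset (Set.sep_subset _ _)
  have hmaps : Set.MapsTo (List.countP (· % 3 = 0)) {π ∈ 𝓐 | π.sum = n}
      (Finset.range (min i j + 1)) := by
    rintro π ⟨⟨-, -, hπ⟩, -⟩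
    rw [sum_map_tallColour, sum_map_colour, Prod.mk.injEq, Prod.mk.injEq] at hπ
    rw [Finset.mem_coe, Finset.mem_range]
    omega
  rw [gappedGF, coeff_listGF (finite_weightedChains lt_of_schurGap), ← h𝓐,
    Set.ncard_eq_toFinset_card _ hfin,
    Finset.card_eq_sum_card_fiberwise (hfin.coe_toFinset.symm ▸ hmaps)]
  refine Finset.sum_congr rfl fun t ht => ?_
  rw [Finset.mem_range, Nat.lt_succ_iff, le_min_iff] at ht
  rw [schurG_eq_ncard hl hLM, Nat.sub_add_cancel ht.1, Nat.sub_add_cancel ht.2,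
    ← Set.ncard_coe_finset, Finset.coe_filter]
  simp only [hfin.mem_toFinset, Set.mem_ofPred_eq, and_assoc, h𝓐]

lemma countP_mod_three_ne_two (π : List ℕ) :
    π.countP (· % 3 ≠ 2) = π.countP (· % 3 = 1) + π.countP (· % 3 = 0) := by
  induction π with
  | nil => rfl
  | cons x π ih => grind

-- No tall part is `≡ 2 (mod 3)`, so there are at most `r + t` tall parts.
lemma schurG_eq_zero {r t l : ℕ} (h : r + t < l) (n s L M : ℕ) : schurG n r s t l L M = 0 := by
  refine (congr_arg Set.ncard (Set.eq_empty_of_forall_notMem fun π => ?_)).trans (Set.ncard_empty _)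
  simp only [Set.mem_ofPred_eq, coe_list_eq_map_cast, ← List.countP_eq_length_filter,
    List.countP_map]
  rintro ⟨-, -, hr, -, -, htwo, ht, -, hl, -, -⟩
  have hle : l ≤ π.countP (· % 3 ≠ 2) := by
    conv_lhs => rw [← hl]
    refine List.countP_mono_left fun x hx htall => ?_
    have := htwo x hx
    grind
  rw [countP_mod_three_ne_two, hr, ht] at hle
  exact h.not_ge hle

lemma finsum_schurG (n r s t L M : ℕ) :
    ∑ᶠ l, schurG n r s t l L M = ∑ l ∈ Finset.range (r + t + 1), schurG n r s t l L M := by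
  refine finsum_eq_sum_of_support_subset _ fun l hl => ?_
  rw [Finset.coe_range, Set.mem_Iio, Nat.lt_succ_iff]
  exact not_lt.1 fun h => hl (schurG_eq_zero h n s L M)

lemma finsum_ite_add_eq_and_add_eq {A : Type*} [AddCommMonoid A] (f : ℕ → ℕ → ℕ → A) (i j : ℕ) :
    ∑ᶠ (r : ℕ) (s : ℕ) (t : ℕ), (if r + t = i ∧ s + t = j then f r s t else 0) =
      ∑ t ∈ Finset.range (min i j + 1), f (i - t) (j - t) t := by
  set F : ℕ × ℕ × ℕ → A := fun p =>
    if p.1 + p.2.2 = i ∧ p.2.1 + p.2.2 = j then f p.1 p.2.1 p.2.2 else 0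
  have hsupp : Function.support F ⊆
      (Finset.range (min i j + 1)).image fun t => (i - t, j - t, t) := by
    rintro ⟨r, s, t⟩ hF
    have hrst : r + t = i ∧ s + t = j := by
      by_contra hne
      exact hF (if_neg hne)
    simp only [Finset.coe_image, Finset.coe_range, Set.mem_image, Set.mem_Iio, Prod.mk.injEq]
    exact ⟨t, by omega, by omega, by omega, rfl⟩
  calc _ = ∑ᶠ p, F p := (finsum_curry₃ F ((Finset.finite_toSet _).subset hsupp)).symm
    _ = _ := by
      rw [finsum_eq_sum_of_support_subset F hsupp,
        Finset.sum_image fun _ _ _ _ h => congr_arg (·.2.2) h]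
      refine Finset.sum_congr rfl fun t ht => if_pos ?_
      grind

end Coefficients

theorem double_bounded_refined_schur_general (n i j L M : ℕ) (hLM : L ≤ M) (hi : i ≤ L) :
    schurP n i j L M = ∑ᶠ (r : ℕ) (s : ℕ) (t : ℕ) (l : ℕ),
      (if r + t = i ∧ s + t = j then schurG n r s t l L M else 0) := by
  have hpull (r s t : ℕ) :
      ∑ᶠ l, (if r + t = i ∧ s + t = j then schurG n r s t l L M else 0) =
        if r + t = i ∧ s + t = j then ∑ l ∈ Finset.range (i + 1), schurG n r s t l L M else 0 := by
    split_ifs with h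
    · rw [finsum_schurG, h.1]
    · exact finsum_zero
  calc schurP n i j L M
      = coeff n (refinedSchurGF i j L M) := by
        rw [schurP_eq_coeff_productGF, refinedSchurGF_eq_productGF hi hLM]
    _ = ∑ l ∈ Finset.range (i + 1), ∑ t ∈ Finset.range (min i j + 1),
          schurG n (i - t) (j - t) t l L M := by
        rw [refinedSchurGF, map_sum]
        exact Finset.sum_congr rfl fun l hl => coeff_gappedGF (by grind) hLM n i j
    _ = ∑ᶠ (r : ℕ) (s : ℕ) (t : ℕ) (l : ℕ),
          (if r + t = i ∧ s + t = j then schurG n r s t l L M else 0) := by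
        simp only [hpull]
        rw [finsum_ite_add_eq_and_add_eq, Finset.sum_comm]

/-- Theorem 3: the double bounded refinement of Schur's partition theorem.  For
non-negative integers `M ≥ L ≥ i + j`,
`P(n; i, j, L, M) = ∑_{r+t=i, s+t=j} ∑_{l ≥ 0} G(n; r, s, t, l, L, M)`. -/
theorem double_bounded_refined_schur (n i j L M : ℕ)
    (hLM : L ≤ M) (hij : i + j ≤ L) :
    schurP n i j L M = ∑ᶠ (r : ℕ) (s : ℕ) (t : ℕ) (l : ℕ),
      (if r + t = i ∧ s + t = j then schurG n r s t l L M else 0) :=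
  double_bounded_refined_schur_general n i j L M hLM (le_of_add_le_left hij)
end
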